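/- Let Ψ : (0,∞) → (0,∞) and ω : (0,∞) → (0,1) be such that the maps q ↦ q²Ψ(q) and q ↦ q²Ψ(q)ω(q) are non-increasing on (0,∞), Σ_{q=1}^∞ qΨ(q) < ∞ (sum over positive integers q), and lim_{q→∞} ω(q) = 0. Assume also that ω(q) ≥ (45/Ψ(q)) · Ψ(1/(2qΨ(q))) for all sufficiently large q. Then dim_H(E(Ψ,ω)) = inf{s ≥ 0 : Σ_{q=1}^∞ q(Ψ(q)ω(q))^s < ∞}. -/

import Mathlib

/-!
Write `ρ = Ψ ω`, and let `s₀` be the infimum of the `s ≥ 0` with `∑ q ρ(q)^s < ∞`.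

*Upper bound.* A point of `E(Ψ, ω)` lies, for infinitely many `q`, in an annulus
`(1 - ω q) Ψ q ≤ |x - p / q| ≤ Ψ q`, which consists of two intervals of length `ρ q`. There are
`O(q)` of them meeting a bounded set, so convergence of `∑ q ρ(q)^s` bounds the `s`-dimensional
Hausdorff measure on bounded sets.

*Lower bound.* For `s < s₀` one finds a Cantor subset of `E(Ψ, ω)` of dimension at least `s`, whose
basic intervals are right halves `[p / q + (1 - ω q) Ψ q, p / q + Ψ q]` of annuli. Such an interval
`[a, b]` comes with the threshold `R = 1 / (2 q Ψ q)`: since distinct fractions satisfy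
`|p / q - p' / q'| ≥ 1 / (q q')`, its points are automatically far from all rationals other than
`p / q` of denominator below `R`. The hypothesis `ω ≥ (45 / Ψ) Ψ(1 / (2 q Ψ))` says exactly that
`45 Ψ R ≤ b - a`.

Given `[a, b]` and `R`, take a large `Q`. By Dirichlet's theorem every point of `[a, b]` is close to
a rational of denominator at most `Q`. The points for which this denominator is less than about
`Q / 1024`, and those close to a rational of denominator `q' ∈ [R, Q]` within `4 Ψ q'`, leave a
positive proportion of `[a, b]`; this is seen block by block over dyadic ranges of denominators,
using the convergence of `∑ q Ψ q` and `45 Ψ R ≤ b - a`. Hence at least a constant times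
`(b - a) Q²` rationals in `[a, b]` have denominator comparable to `Q` and are far from all rationals
of intermediate denominator. They are `1 / Q²`-separated, and each is the centre of a child of
`[a, b]`.

Divergence of `∑ q ρ(q)^s'` for `s < s' < s₀` makes `Q² ρ(Q)^s` arbitrarily large along a sequence
of `Q`, so that an equidistributed mass satisfies `mass ≤ length ^ s` at every stage. Coding the
Cantor set by `[0, 1)` along the masses, the map from the Cantor set onto `[0, 1)` is `s`-Hölder,
whence the dimension is at least `s`.

Replacing `ω` by `ω / 2` shrinks `E(Ψ, ω)` and changes the series by a constant factor only; this
provides the room needed in strict inequalities even where `ω` does not tend to `0`.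
-/

open Filter Set

/-- A real number `x` is `Ψ`-approximable: `|x - p/q| ≤ Ψ q` for infinitely many
pairs `(p, q) ∈ ℤ × ℕ` (with `q > 0`).  `WSet Ψ` is the set `W(Ψ)` of such `x`. -/
def WSet (Ψ : ℝ → ℝ) : Set ℝ :=
  {x : ℝ | {pq : ℤ × ℕ | 0 < pq.2 ∧ |x - (pq.1 : ℝ) / (pq.2 : ℝ)| ≤ Ψ (pq.2 : ℝ)}.Infinite}

/-- `ESet Ψ ω` is the set `E(Ψ, ω)` of `x ∈ W(Ψ)` such that for all sufficiently large
`q ∈ ℕ` one has `|x - p/q| ≥ (1 - ω q) * Ψ q` for every `p ∈ ℤ`. -/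
def ESet (Ψ ω : ℝ → ℝ) : Set ℝ :=
  {x : ℝ | x ∈ WSet Ψ ∧ ∃ Q : ℕ, ∀ q : ℕ, Q ≤ q → ∀ p : ℤ,
    (1 - ω (q : ℝ)) * Ψ (q : ℝ) ≤ |x - (p : ℝ) / (q : ℝ)|}

open MeasureTheory

/-! ### Hausdorff dimension -/

theorem dimH_le_dimH_image_div {X Y : Type*} [EMetricSpace X] [EMetricSpace Y] {g : X → Y}
    {A : Set X} {C r : NNReal} (hr : 0 < r)
    (hg : ∀ x ∈ A, ∀ y ∈ A, edist x y ≤ C * edist (g x) (g y) ^ (r : ℝ)) :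
    dimH A ≤ dimH (g '' A) / r := by
  rcases A.eq_empty_or_nonempty with rfl | ⟨a, -⟩
  · simp
  have : Nonempty X := ⟨a⟩
  have hinj : InjOn g A := fun x hx y hy hxy => by
    simpa [hxy, ENNReal.zero_rpow_of_pos (NNReal.coe_pos.2 hr)] using hg x hx y hy
  have hleft : LeftInvOn (Function.invFunOn g A) g A := hinj.leftInvOn_invFunOn
  have hholder : HolderOnWith C r (Function.invFunOn g A) (g '' A) := by
    rintro _ ⟨x, hx, rfl⟩ _ ⟨y, hy, rfl⟩
    simpa only [hleft hx, hleft hy] using hg x hx y hy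
  simpa only [hleft.image_image] using hholder.dimH_image_le hr

/-- The Hausdorff–Cantelli lemma. -/
theorem hausdorffMeasure_setOf_infinite_eq_zero {X ι : Type*} [EMetricSpace X] [MeasurableSpace X]
    [BorelSpace X] [Countable ι] {A : ι → Set X} {d : ℝ} (hd : 0 < d)
    (hA : ∑' i, Metric.ediam (A i) ^ d ≠ ⊤) :
    Measure.hausdorffMeasure d {x | {i | x ∈ A i}.Infinite} = 0 := by
  classical
  let tail : Finset ι → ENNReal := fun s => ∑' i : {i // i ∉ s}, Metric.ediam (A i) ^ d
  have htail : Tendsto tail atTop (nhds 0) := ENNReal.tendsto_tsum_compl_atTop_zero hA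
  have hradius : Tendsto (fun s => tail s ^ d⁻¹) atTop (nhds 0) := by
    simpa [ENNReal.zero_rpow_of_pos (inv_pos.2 hd)] using htail.ennrpow_const d⁻¹
  have hcover : ∀ s : Finset ι, {x | {i | x ∈ A i}.Infinite} ⊆ ⋃ i : {i // i ∉ s}, A i := by
    intro s x hx
    obtain ⟨i, hi, his⟩ := Set.Infinite.exists_notMem_finset hx s
    exact mem_iUnion.2 ⟨⟨i, his⟩, hi⟩
  have hdiam : ∀ (s : Finset ι) (i : {i // i ∉ s}), Metric.ediam (A i) ≤ tail s ^ d⁻¹ := by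
    intro s i
    rw [ENNReal.le_rpow_inv_iff hd]
    exact ENNReal.le_tsum i
  refine nonpos_iff_eq_zero.1 ((Measure.hausdorffMeasure_le_liminf_tsum d _ _ hradius
    (fun s (i : {i // i ∉ s}) => A i) (.of_forall hdiam) (.of_forall hcover)).trans_eq
      htail.liminf_eq)

theorem dimH_setOf_infinite_le {X ι : Type*} [EMetricSpace X] [Countable ι] {A : ι → Set X}
    {d : ℝ} (hd : 0 < d) (hA : ∑' i, Metric.ediam (A i) ^ d ≠ ⊤) :
    dimH {x | {i | x ∈ A i}.Infinite} ≤ ENNReal.ofReal d := by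
  borelize X
  refine dimH_le_of_hausdorffMeasure_ne_top ?_
  rw [Real.coe_toNNReal d hd.le, hausdorffMeasure_setOf_infinite_eq_zero hd hA]
  exact ENNReal.zero_ne_top

/-- A Cantor construction on the line: the node `σ` carries the interval `[left σ, right σ]` and a
mass, which is shared equally by its `arity σ` children `child σ i`, `i < arity σ`; the values of
`child σ` at larger indices are irrelevant. The constant `c` measures how evenly the children are
spread. -/
structure CantorSystem (S : Type*) (s c : ℝ) where
  left : S → ℝ
  right : S → ℝ
  mass : S → ℝ
  arity : S → ℕ
  child : S → ℕ → S
  left_lt_right (σ : S) : left σ < right σ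
  mass_pos (σ : S) : 0 < mass σ
  mass_le_rpow (σ : S) : mass σ ≤ (right σ - left σ) ^ s
  two_le_arity (σ : S) : 2 ≤ arity σ
  Icc_child_subset {σ : S} {i : ℕ} (hi : i < arity σ) :
    Icc (left (child σ i)) (right (child σ i)) ⊆ Icc (left σ) (right σ)
  mass_child {σ : S} {i : ℕ} (hi : i < arity σ) : mass (child σ i) = mass σ / arity σ
  le_gap {σ : S} {i j : ℕ} (hij : i < j) (hj : j < arity σ) :
    c * (j - i) * ((right σ - left σ) / arity σ) ≤ left (child σ j) - right (child σ i)

namespace CantorSystem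

variable {S : Type*} {s c : ℝ} (K : CantorSystem S s c)

/-- The basic interval of a node. -/
def interval (σ : S) : Set ℝ := Icc (K.left σ) (K.right σ)

/-- The leading digit of `p.2 ∈ [0, 1)` in base `arity p.1`. -/
noncomputable def digit (p : S × ℝ) : ℕ := ⌊p.2 * K.arity p.1⌋₊

/-- The shift map of the mixed-base expansion: it descends to the child selected by the leading
digit and rescales the rest of the expansion to `[0, 1)`. -/
noncomputable def next (p : S × ℝ) : S × ℝ :=
  (K.child p.1 (K.digit p), Int.fract (p.2 * K.arity p.1))

/-- The set coded by the expansion `p.2` below the node `p.1`: the intersection of the basic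
intervals along the branch. -/
def branchSet (p : S × ℝ) : Set ℝ := ⋂ n, K.interval (K.next^[n] p).1

theorem arity_pos (σ : S) : (0 : ℝ) < K.arity σ := by
  exact_mod_cast two_pos.trans_le (K.two_le_arity σ)

variable {K} {p : S × ℝ}

theorem snd_iterate_next_mem (hp : p.2 ∈ Ico (0 : ℝ) 1) :
    ∀ n, (K.next^[n] p).2 ∈ Ico (0 : ℝ) 1
  | 0 => hp
  | n + 1 => by
    rw [Function.iterate_succ_apply']
    exact ⟨Int.fract_nonneg _, Int.fract_lt_one _⟩

theorem digit_lt_arity (hp : p.2 ∈ Ico (0 : ℝ) 1) : K.digit p < K.arity p.1 := by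
  have harity := K.arity_pos p.1
  rw [digit, Nat.floor_lt (mul_nonneg hp.1 harity.le)]
  exact mul_lt_of_lt_one_left harity hp.2

theorem snd_next (hp : p.2 ∈ Ico (0 : ℝ) 1) :
    (K.next p).2 = p.2 * K.arity p.1 - K.digit p := by
  have hnonneg := mul_nonneg hp.1 (K.arity_pos p.1).le
  rw [next, digit, natCast_floor_eq_intCast_floor hnonneg, Int.self_sub_floor]

theorem exists_fst_iterate_next_succ (hp : p.2 ∈ Ico (0 : ℝ) 1) (n : ℕ) :
    ∃ i < K.arity (K.next^[n] p).1,
      (K.next^[n + 1] p).1 = K.child (K.next^[n] p).1 i :=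
  ⟨_, digit_lt_arity (snd_iterate_next_mem hp n), by rw [Function.iterate_succ_apply']; rfl⟩

theorem branchSet_nonempty (hp : p.2 ∈ Ico (0 : ℝ) 1) : (K.branchSet p).Nonempty := by
  have hanti : Antitone fun n => K.interval (K.next^[n] p).1 := by
    refine antitone_nat_of_succ_le fun n => ?_
    obtain ⟨i, hi, hn⟩ := exists_fst_iterate_next_succ hp n
    rw [hn]
    exact K.Icc_child_subset hi
  exact ⟨_, ciSup_mem_iInter_Icc_of_antitone_Icc hanti fun n => (K.left_lt_right _).le⟩

theorem branchSet_subset_interval : K.branchSet p ⊆ K.interval p.1 := iInter_subset _ 0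

theorem branchSet_subset_branchSet_next : K.branchSet p ⊆ K.branchSet (K.next p) :=
  subset_iInter fun n => iInter_subset (fun n => K.interval (K.next^[n] p).1) (n + 1)

/-- Since `s ≤ 1`, the mass of a node is at most proportional to the length, on scales below that of
the node. -/
theorem mass_mul_le (hs : s ≤ 1) {σ : S} {u : ℝ} (hu : 0 < u) (hu' : u ≤ K.right σ - K.left σ) :
    K.mass σ * u ≤ (K.right σ - K.left σ) * u ^ s := by
  set ℓ := K.right σ - K.left σ
  have hℓ : 0 < ℓ := hu.trans_le hu'
  calc K.mass σ * u ≤ ℓ ^ s * u := by gcongr; exact K.mass_le_rpow σ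
    _ = ℓ * u * ℓ ^ (s - 1) := by rw [Real.rpow_sub_one hℓ.ne']; field_simp
    _ ≤ ℓ * u * u ^ (s - 1) := by
      gcongr ?_ * ?_
      exact Real.rpow_le_rpow_of_nonpos hu hu' (by linarith)
    _ = ℓ * u ^ s := by rw [Real.rpow_sub_one hu.ne']; field_simp

theorem mul_digit_sub_le_abs_sub {σ : S} {t t' x x' : ℝ} (ht' : t' ∈ Ico (0 : ℝ) 1)
    (hx : x ∈ K.branchSet (σ, t)) (hx' : x' ∈ K.branchSet (σ, t'))
    (hdigit : K.digit (σ, t) < K.digit (σ, t')) :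
    c * (K.digit (σ, t') - K.digit (σ, t)) * ((K.right σ - K.left σ) / K.arity σ) ≤ |x - x'| := by
  have hxi := branchSet_subset_interval (branchSet_subset_branchSet_next hx)
  have hxj := branchSet_subset_interval (branchSet_subset_branchSet_next hx')
  have hgap := K.le_gap hdigit (digit_lt_arity (p := (σ, t')) ht')
  rw [abs_sub_comm]
  exact (hgap.trans (sub_le_sub hxj.1 hxi.2)).trans (le_abs_self _)

theorem abs_sub_mul_arity_lt {σ : S} {t t' : ℝ} (ht : t ∈ Ico (0 : ℝ) 1)
    (ht' : t' ∈ Ico (0 : ℝ) 1) (hdigit : K.digit (σ, t) ≤ K.digit (σ, t')) :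
    |t - t'| * K.arity σ < K.digit (σ, t') - K.digit (σ, t) + 1 := by
  have hfract : (K.next (σ, t)).2 ∈ Ico (0 : ℝ) 1 := snd_iterate_next_mem (p := (σ, t)) ht 1
  have hfract' : (K.next (σ, t')).2 ∈ Ico (0 : ℝ) 1 := snd_iterate_next_mem (p := (σ, t')) ht' 1
  have hdigit' : (K.digit (σ, t) : ℝ) ≤ K.digit (σ, t') := by exact_mod_cast hdigit
  rw [snd_next (p := (σ, t)) ht] at hfract
  rw [snd_next (p := (σ, t')) ht'] at hfract'
  rw [← abs_of_pos (K.arity_pos σ), ← abs_mul, abs_lt]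
  constructor <;> linarith [hfract.1, hfract.2, hfract'.1, hfract'.2]

theorem abs_sub_mul_mass_le_of_digit_lt (hs : s ≤ 1) (hc : 0 < c) {σ : S} {t t' x x' : ℝ}
    (ht : t ∈ Ico (0 : ℝ) 1) (ht' : t' ∈ Ico (0 : ℝ) 1) (hx : x ∈ K.branchSet (σ, t))
    (hx' : x' ∈ K.branchSet (σ, t')) (hdigit : K.digit (σ, t) < K.digit (σ, t')) :
    |t - t'| * K.mass σ ≤ 2 / c * |x - x'| ^ s := by
  have harity := K.arity_pos σ
  set i := K.digit (σ, t)
  set j := K.digit (σ, t')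
  have hij : (1 : ℝ) ≤ j - i := by
    have : (i : ℝ) + 1 ≤ j := by exact_mod_cast hdigit
    linarith
  have hlen : 0 < K.right σ - K.left σ := sub_pos.2 (K.left_lt_right σ)
  have hgap : c * (j - i) * ((K.right σ - K.left σ) / K.arity σ) ≤ |x - x'| :=
    mul_digit_sub_le_abs_sub ht' hx hx' hdigit
  have hdist : |t - t'| ≤ 2 * (j - i) / K.arity σ := by
    rw [le_div_iff₀ harity]
    linarith [abs_sub_mul_arity_lt ht ht' hdigit.le]
  have hpos : 0 < |x - x'| := lt_of_lt_of_le (by positivity) hgap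
  have hle : |x - x'| ≤ K.right σ - K.left σ := by
    have hxσ := branchSet_subset_interval hx
    have hxσ' := branchSet_subset_interval hx'
    rw [abs_le]
    constructor <;> linarith [hxσ.1, hxσ.2, hxσ'.1, hxσ'.2]
  refine le_of_mul_le_mul_right ?_ (mul_pos hpos hlen)
  calc |t - t'| * K.mass σ * (|x - x'| * (K.right σ - K.left σ))
      = |t - t'| * (K.mass σ * |x - x'|) * (K.right σ - K.left σ) := by ring
    _ ≤ 2 * (j - i) / K.arity σ * ((K.right σ - K.left σ) * |x - x'| ^ s) *
        (K.right σ - K.left σ) := by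
      have hmass := mass_mul_le hs hpos hle
      have hmass₀ := K.mass_pos σ
      gcongr
    _ = 2 / c * |x - x'| ^ s * (c * (j - i) * ((K.right σ - K.left σ) / K.arity σ) *
        (K.right σ - K.left σ)) := by field_simp
    _ ≤ 2 / c * |x - x'| ^ s * (|x - x'| * (K.right σ - K.left σ)) := by gcongr

/-- As long as the digits of `t` and `t'` agree, the shift multiplies `|t - t'|` by the factor by
which it divides the mass. Since it at least doubles `|t - t'|`, the digits must differ at some
stage if `t ≠ t'`. -/
theorem abs_sub_mul_mass_le (hs : s ≤ 1) (hc : 0 < c) {σ : S} {t t' x x' : ℝ}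
    (ht : t ∈ Ico (0 : ℝ) 1) (ht' : t' ∈ Ico (0 : ℝ) 1) (hx : x ∈ K.branchSet (σ, t))
    (hx' : x' ∈ K.branchSet (σ, t')) :
    |t - t'| * K.mass σ ≤ 2 / c * |x - x'| ^ s := by
  rcases eq_or_ne t t' with rfl | hne
  · rw [sub_self, abs_zero, zero_mul]
    positivity
  obtain ⟨n, hn⟩ := exists_pow_lt_of_lt_one (abs_pos.2 (sub_ne_zero.2 hne)) one_half_lt_one
  clear hne
  induction n generalizing σ t t' with
  | zero =>
    refine absurd hn (not_lt.2 ?_)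
    rw [pow_zero, abs_le]
    constructor <;> linarith [ht.1, ht.2, ht'.1, ht'.2]
  | succ n ih =>
    rcases lt_trichotomy (K.digit (σ, t)) (K.digit (σ, t')) with hlt | heq | hgt
    · exact abs_sub_mul_mass_le_of_digit_lt hs hc ht ht' hx hx' hlt
    · have harity := K.arity_pos σ
      have hdiff : |(K.next (σ, t)).2 - (K.next (σ, t')).2| = K.arity σ * |t - t'| := by
        rw [snd_next (p := (σ, t)) ht, snd_next (p := (σ, t')) ht', heq, sub_sub_sub_cancel_right,
          ← sub_mul, abs_mul, abs_of_pos harity, mul_comm]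
      have hchild : (K.next (σ, t')).1 = (K.next (σ, t)).1 := congrArg (K.child σ) heq.symm
      have hdouble : 2 * |t - t'| ≤ K.arity σ * |t - t'| := by
        gcongr
        exact_mod_cast K.two_le_arity σ
      have hnext := ih (σ := (K.next (σ, t)).1) (snd_iterate_next_mem (p := (σ, t)) ht 1)
        (snd_iterate_next_mem (p := (σ, t')) ht' 1) (branchSet_subset_branchSet_next hx)
        (by rw [← hchild]; exact branchSet_subset_branchSet_next hx')
        (by rw [Function.iterate_one, hdiff]; rw [pow_succ] at hn; linarith)
      rw [Function.iterate_one, hdiff] at hnext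
      convert hnext using 1
      rw [show K.mass (K.next (σ, t)).1 = K.mass σ / K.arity σ from
        K.mass_child (digit_lt_arity (p := (σ, t)) ht)]
      field_simp
    · rw [abs_sub_comm t, abs_sub_comm x]
      exact abs_sub_mul_mass_le_of_digit_lt hs hc ht' ht hx' hx hgt

/-- A mass distribution principle: choosing a point in each branch set is an inverse to an
`s`-Hölder map onto `[0, 1)`. -/
theorem ofReal_le_dimH (hs₀ : 0 < s) (hs : s ≤ 1) (hc : 0 < c) (σ : S) {E : Set ℝ}
    (hE : ∀ t ∈ Ico (0 : ℝ) 1, K.branchSet (σ, t) ⊆ E) : ENNReal.ofReal s ≤ dimH E := by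
  have hnonempty : ∀ t ∈ Ico (0 : ℝ) 1, (K.branchSet (σ, t)).Nonempty :=
    fun t ht => branchSet_nonempty ht
  choose! g hg using hnonempty
  have hmass := K.mass_pos σ
  have hholder : ∀ t ∈ Ico (0 : ℝ) 1, ∀ t' ∈ Ico (0 : ℝ) 1,
      edist t t' ≤ (2 / c / K.mass σ).toNNReal * edist (g t) (g t') ^ (s.toNNReal : ℝ) := by
    intro t ht t' ht'
    rw [Real.coe_toNNReal s hs₀.le, edist_dist, edist_dist, Real.dist_eq, Real.dist_eq,
      ENNReal.ofReal_rpow_of_nonneg (abs_nonneg _) hs₀.le, ← ENNReal.ofReal,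
      ← ENNReal.ofReal_mul (by positivity), div_mul_eq_mul_div]
    refine ENNReal.ofReal_le_ofReal ((le_div_iff₀ hmass).2 ?_)
    exact abs_sub_mul_mass_le hs hc ht ht' (hg t ht) (hg t' ht')
  have hle := dimH_le_dimH_image_div (Real.toNNReal_pos.2 hs₀) hholder
  rw [Real.dimH_of_nonempty_interior (by simp [interior_Ico]),
    ENNReal.le_div_iff_mul_le (.inl (by simpa using hs₀)) (.inl ENNReal.coe_ne_top),
    Module.finrank_self, Nat.cast_one, one_mul] at hle
  exact hle.trans (dimH_mono (image_subset_iff.2 fun t ht => hE t ht (hg t ht)))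

end CantorSystem

/-! ### Separated sets and fractions -/

theorem exists_enum_of_separated (T : Finset ℝ) {g : ℝ}
    (hT : (T : Set ℝ).Pairwise fun x y => g ≤ |x - y|) :
    ∃ x : ℕ → ℝ, (∀ i < T.card, x i ∈ T) ∧
      ∀ i j : ℕ, i ≤ j → j < T.card → ((j : ℝ) - i) * g ≤ x j - x i := by
  let e := T.orderEmbOfFin rfl
  let x : ℕ → ℝ := fun i => if h : i < T.card then e ⟨i, h⟩ else 0
  have hx : ∀ i (hi : i < T.card), x i = e ⟨i, hi⟩ := fun i hi => dif_pos hi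
  have hmem : ∀ i < T.card, x i ∈ T := fun i hi => hx i hi ▸ T.orderEmbOfFin_mem rfl _
  refine ⟨x, hmem, fun i j hij => ?_⟩
  induction j, hij using Nat.le_induction with
  | base => simp
  | succ j _ ih =>
    intro hj
    have hlt : x j < x (j + 1) := by
      rw [hx j (by omega), hx (j + 1) hj]
      exact e.strictMono (Fin.mk_lt_mk.2 j.lt_succ_self)
    have hgap : g ≤ |x (j + 1) - x j| := hT (hmem _ hj) (hmem j (by omega)) hlt.ne'
    rw [abs_of_pos (sub_pos.2 hlt)] at hgap
    have := ih (by omega)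
    push_cast
    linarith

section Separated

variable {S : Set ℝ} {a b g : ℝ}

theorem card_le_of_separated {T : Finset ℝ} (hg : 0 < g) (hab : a ≤ b)
    (hT : (T : Set ℝ).Pairwise fun x y => g ≤ |x - y|) (hTab : (T : Set ℝ) ⊆ Icc a b) :
    (T.card : ℝ) ≤ 1 + (b - a) / g := by
  obtain ⟨x, hx, hgap⟩ := exists_enum_of_separated T hT
  rcases T.card.eq_zero_or_pos with h | h
  · rw [h, Nat.cast_zero]
    have := div_nonneg (sub_nonneg.2 hab) hg.le
    linarith
  · have hspread := hgap 0 (T.card - 1) (Nat.zero_le _) (by omega)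
    have hfirst := hTab (hx 0 h)
    have hlast := hTab (hx (T.card - 1) (by omega))
    rw [Nat.cast_pred h, Nat.cast_zero, sub_zero] at hspread
    rw [← sub_le_iff_le_add', le_div_iff₀ hg]
    linarith [hfirst.1, hlast.2]

theorem finite_of_separated (hg : 0 < g) (hS : S.Pairwise fun x y => g ≤ |x - y|)
    (hSab : S ⊆ Icc a b) : S.Finite := by
  rcases lt_or_ge b a with hba | hab
  · exact (Icc_eq_empty (not_le.2 hba) ▸ finite_empty).subset hSab
  by_contra hinf
  obtain ⟨n, hn⟩ := exists_nat_gt (1 + (b - a) / g)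
  obtain ⟨T, hTS, rfl⟩ := Set.Infinite.exists_subset_card_eq hinf n
  exact absurd (card_le_of_separated hg hab (hS.mono hTS) (hTS.trans hSab)) (not_le.2 hn)

theorem volume_iUnion_closedBall_le (T : Finset ℝ) {r : ℝ} :
    volume (⋃ y ∈ T, Metric.closedBall y r) ≤ ENNReal.ofReal (T.card * (2 * r)) := by
  refine (measure_biUnion_finset_le T _).trans_eq ?_
  simp only [Real.volume_closedBall, Finset.sum_const, nsmul_eq_mul]
  rw [ENNReal.ofReal_mul (Nat.cast_nonneg _), ENNReal.ofReal_natCast]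

theorem volume_Icc_inter_iUnion_closedBall_le (hg : 0 < g) (hab : a ≤ b)
    (hS : S.Pairwise fun x y => g ≤ |x - y|) {r : ℝ} (hr : 0 ≤ r) :
    volume (Icc a b ∩ ⋃ y ∈ S, Metric.closedBall y r) ≤
      ENNReal.ofReal ((1 + (b - a + 2 * r) / g) * (2 * r)) := by
  have hsep := hS.mono (inter_subset_left (t := Icc (a - r) (b + r)))
  have hfin := finite_of_separated hg hsep inter_subset_right
  have hcard := card_le_of_separated hg (by linarith)
    (by rwa [hfin.coe_toFinset]) (hfin.coe_toFinset.subset.trans inter_subset_right)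
  have hcover : Icc a b ∩ ⋃ y ∈ S, Metric.closedBall y r ⊆
      ⋃ y ∈ hfin.toFinset, Metric.closedBall y r := by
    rintro x ⟨hx, hxS⟩
    obtain ⟨y, hy, hxy⟩ := mem_iUnion₂.1 hxS
    have hdist := abs_le.1 (Metric.mem_closedBall.1 hxy)
    refine mem_iUnion₂.2 ⟨y, hfin.mem_toFinset.2 ⟨hy, ?_, ?_⟩, hxy⟩ <;>
      linarith [hx.1, hx.2, hdist.1, hdist.2]
  refine (measure_mono hcover).trans ((volume_iUnion_closedBall_le _).trans ?_)
  refine ENNReal.ofReal_le_ofReal (mul_le_mul_of_nonneg_right ?_ (by positivity))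
  exact hcard.trans_eq (by ring)

end Separated

theorem one_div_mul_le_abs_sub {p p' : ℤ} {q q' : ℕ} (hq : 0 < q) (hq' : 0 < q')
    (hne : (p : ℝ) / q ≠ p' / q') : 1 / ((q : ℝ) * q') ≤ |(p : ℝ) / q - p' / q'| := by
  have hq₀ : (0 : ℝ) < q := by exact_mod_cast hq
  have hq₀' : (0 : ℝ) < q' := by exact_mod_cast hq'
  have hnum : p * q' - q * p' ≠ 0 := fun h => hne <| by
    rw [div_eq_div_iff hq₀.ne' hq₀'.ne', mul_comm (p' : ℝ)]
    exact_mod_cast sub_eq_zero.1 h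
  rw [div_sub_div _ _ hq₀.ne' hq₀'.ne', abs_div, abs_of_pos (mul_pos hq₀ hq₀')]
  gcongr
  exact_mod_cast Int.one_le_abs hnum

/-- The rationals with denominator at most `N`, as a set of reals. -/
def boundedFractions (N : ℝ) : Set ℝ := {y | ∃ r : ℚ, r = y ∧ (r.den : ℝ) ≤ N}

theorem div_mem_boundedFractions {p : ℤ} {q : ℕ} {N : ℝ} (hq : 0 < q) (hqN : q ≤ N) :
    (p : ℝ) / q ∈ boundedFractions N := by
  refine ⟨p / q, by push_cast; rfl, le_trans ?_ hqN⟩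
  have hdvd : ((p / q : ℚ).den : ℤ) ∣ q := by exact_mod_cast Rat.den_dvd p q
  exact_mod_cast Nat.le_of_dvd hq (Int.natCast_dvd_natCast.1 hdvd)

theorem boundedFractions_separated (N : ℝ) :
    (boundedFractions N).Pairwise fun x y => 1 / N ^ 2 ≤ |x - y| := by
  rintro _ ⟨r, rfl, hr⟩ _ ⟨r', rfl, hr'⟩ hne
  have hden : (0 : ℝ) < r.den := by exact_mod_cast r.den_pos
  have hden' : (0 : ℝ) < r'.den := by exact_mod_cast r'.den_pos
  have hN : 0 ≤ N := hden.le.trans hr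
  rw [Rat.cast_def r, Rat.cast_def r'] at hne ⊢
  refine le_trans ?_ (one_div_mul_le_abs_sub r.den_pos r'.den_pos hne)
  rw [sq]
  gcongr

/-- The points within `φ q` of a fraction `p / q` with `A ≤ q < B`. -/
def nearFractions (A B : ℝ) (φ : ℝ → ℝ) : Set ℝ :=
  {x | ∃ (p : ℤ) (q : ℕ), A ≤ q ∧ q < B ∧ |x - p / q| ≤ φ q}

theorem nearFractions_subset_union (A B C : ℝ) (φ : ℝ → ℝ) :
    nearFractions A C φ ⊆ nearFractions A B φ ∪ nearFractions B C φ := by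
  rintro x ⟨p, q, hA, hC, hx⟩
  rcases lt_or_ge (q : ℝ) B with hB | hB
  exacts [.inl ⟨p, q, hA, hB, hx⟩, .inr ⟨p, q, hB, hC, hx⟩]

section DyadicBlocks

variable {a b D : ℝ} {φ : ℝ → ℝ}

theorem volume_nearFractions_two_mul_le (hab : a ≤ b) (hD : 0 < D) (hφ : 0 ≤ φ D)
    (hanti : AntitoneOn φ (Ioi 0)) :
    volume (Icc a b ∩ nearFractions D (2 * D) φ) ≤
      ENNReal.ofReal (2 * φ D + 8 * (b - a + 2 * φ D) * (D ^ 2 * φ D)) := by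
  have hcover : nearFractions D (2 * D) φ ⊆
      ⋃ y ∈ boundedFractions (2 * D), Metric.closedBall y (φ D) := by
    rintro x ⟨p, q, hDq, hqD, hx⟩
    have hq : (0 : ℝ) < q := hD.trans_le hDq
    exact mem_iUnion₂.2 ⟨p / q, div_mem_boundedFractions (by exact_mod_cast hq) hqD.le,
      hx.trans (hanti hD hq hDq)⟩
  refine (measure_mono (inter_subset_inter_right _ hcover)).trans
    ((volume_Icc_inter_iUnion_closedBall_le (by positivity) hab
      (boundedFractions_separated _) hφ).trans_eq (congrArg _ ?_))
  field_simp
  ring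

theorem volume_nearFractions_two_pow_mul_le (hab : a ≤ b) (hD : 0 < D)
    (hφ : ∀ q, 0 < q → 0 ≤ φ q) (hanti : AntitoneOn φ (Ioi 0)) (hφD : 2 * φ D ≤ b - a) (N : ℕ) :
    volume (Icc a b ∩ nearFractions D (2 ^ N * D) φ) ≤ ENNReal.ofReal
      (∑ j ∈ Finset.range N,
        (2 * φ (2 ^ j * D) + 16 * (b - a) * ((2 ^ j * D) ^ 2 * φ (2 ^ j * D)))) := by
  have hblock : ∀ j, 0 ≤ φ (2 ^ j * D) := fun j => hφ _ (by positivity)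
  induction N with
  | zero =>
    have hempty : nearFractions D (2 ^ 0 * D) φ = ∅ :=
      eq_empty_of_forall_notMem fun x ⟨_, _, hge, hlt, _⟩ => by linarith
    rw [hempty]
    simp
  | succ N ih =>
    have hle : φ (2 ^ N * D) ≤ φ D :=
      hanti hD (by simp [hD]) (le_mul_of_one_le_left hD.le (one_le_pow₀ one_le_two))
    rw [Finset.sum_range_succ, ENNReal.ofReal_add
      (Finset.sum_nonneg fun j _ => by have := hblock j; positivity)
      (by have := hblock N; positivity)]
    refine (measure_mono (inter_subset_inter_right _
      (nearFractions_subset_union D (2 ^ N * D) _ φ))).trans ?_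
    rw [inter_union_distrib_left, pow_succ', mul_assoc]
    refine (measure_union_le _ _).trans (add_le_add ih ?_)
    refine (volume_nearFractions_two_mul_le hab (by positivity) (hblock N) hanti).trans ?_
    refine ENNReal.ofReal_le_ofReal ?_
    have := hblock N
    calc _ ≤ 2 * φ (2 ^ N * D) +
          8 * (b - a + (b - a)) * ((2 ^ N * D) ^ 2 * φ (2 ^ N * D)) := by gcongr; linarith
      _ = _ := by ring

end DyadicBlocks

/-! ### Upper bound -/

theorem finite_setOf_abs_sub_div_le (x r : ℝ) {q : ℕ} (hq : 0 < q) :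
    {p : ℤ | |x - p / q| ≤ r}.Finite := by
  have hq₀ : (0 : ℝ) < q := by exact_mod_cast hq
  refine (finite_Icc ⌈(x - r) * q⌉ ⌊(x + r) * q⌋).subset fun p (hp : |x - p / q| ≤ r) => ?_
  obtain ⟨hlower, hupper⟩ := abs_le.1 hp
  rw [mem_Icc, Int.ceil_le, Int.le_floor, ← le_div_iff₀ hq₀, ← div_le_iff₀ hq₀]
  constructor <;> linarith

theorem infinite_setOf_le_of_mem_WSet {Ψ : ℝ → ℝ} {x : ℝ} (hx : x ∈ WSet Ψ) (N : ℕ) :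
    {pq : ℤ × ℕ | N ≤ pq.2 ∧ 0 < pq.2 ∧ |x - pq.1 / pq.2| ≤ Ψ pq.2}.Infinite := by
  have hsmall : {pq : ℤ × ℕ | pq.2 < N ∧ 0 < pq.2 ∧ |x - pq.1 / pq.2| ≤ Ψ pq.2}.Finite := by
    refine Finite.of_finite_fibers Prod.snd ((finite_Iio N).subset ?_) ?_
    · rintro _ ⟨pq, hpq, rfl⟩
      exact hpq.1
    · rintro _ ⟨pq, hpq, rfl⟩
      refine ((finite_setOf_abs_sub_div_le x (Ψ pq.2) hpq.2.1).image (·, pq.2)).subset ?_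
      rintro ⟨p, q⟩ ⟨⟨-, -, hp⟩, rfl : q = pq.2⟩
      exact ⟨p, hp, rfl⟩
  refine (Infinite.sdiff hx hsmall).mono ?_
  rintro pq ⟨hpq, hlarge⟩
  exact ⟨not_lt.1 fun hlt => hlarge ⟨hlt, hpq⟩, hpq⟩

/-- The right (`true`) and left (`false`) halves of the annulus
`(1 - ω q) Ψ q ≤ |x - y| ≤ Ψ q` around `y`. -/
def halfAnnulus (Ψ ω : ℝ → ℝ) (y q : ℝ) : Bool → Set ℝ
  | true => Icc (y + (1 - ω q) * Ψ q) (y + Ψ q)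
  | false => Icc (y - Ψ q) (y - (1 - ω q) * Ψ q)

section UpperBound

variable {Ψ ω : ℝ → ℝ} {d : ℝ}

theorem ediam_halfAnnulus (y q : ℝ) (side : Bool) :
    Metric.ediam (halfAnnulus Ψ ω y q side) = ENNReal.ofReal (Ψ q * ω q) := by
  cases side <;> simp only [halfAnnulus, Real.ediam_Icc] <;> ring_nf

theorem exists_mem_halfAnnulus {x y q : ℝ} (hlower : (1 - ω q) * Ψ q ≤ |x - y|)
    (hupper : |x - y| ≤ Ψ q) : ∃ side, x ∈ halfAnnulus Ψ ω y q side := by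
  rcases le_total 0 (x - y) with h | h
  · rw [abs_of_nonneg h] at hlower hupper
    exact ⟨true, by linarith, by linarith⟩
  · rw [abs_of_nonpos h] at hlower hupper
    exact ⟨false, by linarith, by linarith⟩

/-- The half-annuli around the fractions `p / q` with `-K q < p ≤ K q`; the half-open range leaves
none with `q = 0`. -/
def annuliFamily (Ψ ω : ℝ → ℝ) (K : ℕ)
    (i : Σ q : ℕ, ↥(Finset.Ioc (-(K * q : ℕ) : ℤ) (K * q : ℕ)) × Bool) : Set ℝ :=
  halfAnnulus Ψ ω ((i.2.1 : ℤ) / (i.1 : ℕ)) i.1 i.2.2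

theorem tsum_ediam_annuliFamily_ne_top (hd : 0 < d) (hρ : ∀ q : ℕ, 0 < q → 0 ≤ Ψ q * ω q)
    (hsum : Summable fun q : ℕ => (q : ℝ) * (Ψ q * ω q) ^ d) (K : ℕ) :
    ∑' i, Metric.ediam (annuliFamily Ψ ω K i) ^ d ≠ ⊤ := by
  have hblock : ∀ q : ℕ,
      ∑' j : ↥(Finset.Ioc (-(K * q : ℕ) : ℤ) (K * q : ℕ)) × Bool,
        Metric.ediam (annuliFamily Ψ ω K ⟨q, j⟩) ^ d =
      ENNReal.ofReal (4 * K * (q * (Ψ q * ω q) ^ d)) := by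
    intro q
    simp only [annuliFamily, ediam_halfAnnulus]
    rw [tsum_fintype, Finset.sum_const, Finset.card_univ, Fintype.card_prod, Fintype.card_coe,
      Int.card_Ioc, Fintype.card_bool, nsmul_eq_mul]
    rcases q.eq_zero_or_pos with rfl | hq
    · simp
    · rw [ENNReal.ofReal_rpow_of_nonneg (hρ q hq) hd.le, ← ENNReal.ofReal_natCast,
        ← ENNReal.ofReal_mul (Nat.cast_nonneg _), sub_neg_eq_add, ← Nat.cast_add, Int.toNat_natCast]
      push_cast
      ring_nf
  rw [ENNReal.tsum_sigma']
  simp only [hblock]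
  exact (hsum.mul_left _).tsum_ofReal_ne_top

theorem infinite_setOf_mem_annuliFamily (hΨ : ∀ᶠ q : ℕ in atTop, Ψ q ≤ 1) {x : ℝ} {M : ℕ}
    (hx : x ∈ ESet Ψ ω) (hxM : |x| ≤ M) : {i | x ∈ annuliFamily Ψ ω (M + 2) i}.Infinite := by
  obtain ⟨hW, Q, hQ⟩ := hx
  obtain ⟨N, hN⟩ := eventually_atTop.1 hΨ
  refine Infinite.of_image (fun i => ((i.2.1 : ℤ), i.1))
    ((infinite_setOf_le_of_mem_WSet hW (max N Q)).mono ?_)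
  rintro ⟨p, q⟩ ⟨hlarge, hq, hxpq⟩
  have hq₀ : (0 : ℝ) < q := by exact_mod_cast hq
  obtain ⟨side, hside⟩ := exists_mem_halfAnnulus (hQ q ((le_max_right _ _).trans hlarge) p) hxpq
  have hdiv : |(p : ℝ) / q| < M + 2 := by
    have htri := abs_sub_abs_le_abs_sub ((p : ℝ) / q) x
    rw [abs_sub_comm] at htri
    linarith [hxpq.trans (hN q ((le_max_left _ _).trans hlarge))]
  rw [abs_div, abs_of_pos hq₀, div_lt_iff₀ hq₀] at hdiv
  have hp : |p| < ((M + 2) * q : ℕ) := by exact_mod_cast hdiv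
  obtain ⟨hp₁, hp₂⟩ := abs_lt.1 hp
  exact ⟨⟨q, ⟨p, Finset.mem_Ioc.2 ⟨hp₁, hp₂.le⟩⟩, side⟩, hside, rfl⟩

theorem dimH_ESet_le (hd : 0 < d) (hΨ : ∀ᶠ q : ℕ in atTop, Ψ q ≤ 1)
    (hρ : ∀ q : ℕ, 0 < q → 0 ≤ Ψ q * ω q)
    (hsum : Summable fun q : ℕ => (q : ℝ) * (Ψ q * ω q) ^ d) :
    dimH (ESet Ψ ω) ≤ ENNReal.ofReal d := by
  have hcover : ESet Ψ ω ⊆ ⋃ M : ℕ, {x | {i | x ∈ annuliFamily Ψ ω (M + 2) i}.Infinite} := by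
    intro x hx
    obtain ⟨M, hM⟩ := exists_nat_ge |x|
    exact mem_iUnion.2 ⟨M, infinite_setOf_mem_annuliFamily hΨ hx hM⟩
  refine (dimH_mono hcover).trans ?_
  rw [dimH_iUnion]
  exact iSup_le fun M => dimH_setOf_infinite_le hd (tsum_ediam_annuliFamily_ne_top hd hρ hsum _)

end UpperBound

/-! ### Good centres -/

theorem antitoneOn_of_sq_mul {f : ℝ → ℝ} (hf : ∀ q, 0 < q → 0 ≤ f q)
    (hmono : AntitoneOn (fun q => q ^ 2 * f q) (Ioi 0)) : AntitoneOn f (Ioi 0) := by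
  intro q hq r hr hqr
  have hq₀ : 0 < q := hq
  refine le_of_mul_le_mul_left (a := q ^ 2) ?_ (by positivity)
  calc q ^ 2 * f r ≤ r ^ 2 * f r := by have := hf r hr; gcongr
    _ ≤ q ^ 2 * f q := hmono hq hr hqr

theorem apply_two_pow_mul_le {f : ℝ → ℝ} {R : ℝ} (hR : 0 < R) (hf : ∀ q, 0 < q → 0 ≤ f q)
    (hmono : AntitoneOn (fun q => q ^ 2 * f q) (Ioi 0)) (j : ℕ) :
    f (2 ^ j * R) ≤ f R * (1 / 2) ^ j := by
  have hone : (1 : ℝ) ≤ 2 ^ j := one_le_pow₀ one_le_two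
  have hpos := hf (2 ^ j * R) (by positivity)
  rw [one_div_pow, mul_one_div, le_div_iff₀ (by positivity)]
  refine le_of_mul_le_mul_left (a := R ^ 2) ?_ (by positivity)
  calc R ^ 2 * (f (2 ^ j * R) * 2 ^ j) ≤ R ^ 2 * (f (2 ^ j * R) * (2 ^ j * 2 ^ j)) := by
        gcongr; exact le_mul_of_one_le_left (by positivity) hone
    _ = (2 ^ j * R) ^ 2 * f (2 ^ j * R) := by ring
    _ ≤ R ^ 2 * f R := hmono hR (mem_Ioi.2 (by positivity)) (le_mul_of_one_le_left hR.le hone)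

theorem summable_sq_mul_two_pow {f : ℝ → ℝ} (hf : ∀ q, 0 < q → 0 ≤ f q)
    (hmono : AntitoneOn (fun q => q ^ 2 * f q) (Ioi 0))
    (hsum : Summable fun q : ℕ => (q : ℝ) * f q) :
    Summable fun k : ℕ => ((2 : ℝ) ^ k) ^ 2 * f (2 ^ k) := by
  have hnonneg : ∀ n : ℕ, 0 ≤ (n : ℝ) * f n := fun n => by
    rcases n.eq_zero_or_pos with rfl | hn
    · simp
    · have := hf n (by exact_mod_cast hn)
      positivity
  refine ((summable_condensed_iff_of_nonneg hnonneg fun {m n} hm hmn => ?_).2 hsum).congr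
    fun k => by push_cast; ring
  have hm' : (0 : ℝ) < m := by exact_mod_cast hm
  have hmn' : (m : ℝ) ≤ n := by exact_mod_cast hmn
  refine le_of_mul_le_mul_left (a := (m : ℝ)) ?_ hm'
  calc (m : ℝ) * (n * f n) ≤ n * (n * f n) := by have := hnonneg n; gcongr
    _ = (n : ℝ) ^ 2 * f n := by ring
    _ ≤ (m : ℝ) ^ 2 * f m := hmono hm' (hm'.trans_le hmn') hmn'
    _ = m * (m * f m) := by ring

theorem exists_dyadic_sum_le {f : ℝ → ℝ} (hf : ∀ q, 0 < q → 0 ≤ f q)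
    (hmono : AntitoneOn (fun q => q ^ 2 * f q) (Ioi 0))
    (hsum : Summable fun q : ℕ => (q : ℝ) * f q) {ε : ℝ} (hε : 0 < ε) :
    ∃ R₀ : ℝ, 0 < R₀ ∧ ∀ R, R₀ ≤ R → ∀ N : ℕ,
      ∑ j ∈ Finset.range N, (2 ^ j * R) ^ 2 * f (2 ^ j * R) ≤ ε := by
  have hdyadic := summable_sq_mul_two_pow hf hmono hsum
  obtain ⟨k, hk⟩ := ((tendsto_sum_nat_add fun k : ℕ => ((2 : ℝ) ^ k) ^ 2 * f (2 ^ k)).eventually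
    (gt_mem_nhds hε)).exists
  refine ⟨2 ^ k, by positivity, fun R hR N => ?_⟩
  have hR₀ : 0 < R := lt_of_lt_of_le (by positivity) hR
  calc ∑ j ∈ Finset.range N, (2 ^ j * R) ^ 2 * f (2 ^ j * R)
      ≤ ∑ j ∈ Finset.range N, ((2 : ℝ) ^ (j + k)) ^ 2 * f (2 ^ (j + k)) := by
        refine Finset.sum_le_sum fun j _ => hmono (mem_Ioi.2 (by positivity))
          (mem_Ioi.2 (by positivity)) ?_
        rw [pow_add]
        gcongr
    _ ≤ ∑' j : ℕ, ((2 : ℝ) ^ (j + k)) ^ 2 * f (2 ^ (j + k)) :=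
        ((summable_nat_add_iff k).2 hdyadic).sum_le_tsum _ fun j _ => by
          have := hf (2 ^ (j + k)) (by positivity)
          positivity
    _ ≤ ε := hk.le

theorem volume_nearFractions_one_div_le {a b Q : ℝ} {d : ℕ} (hab : a ≤ b) (hQ : 0 < Q)
    (hQab : 128 ≤ Q * (b - a)) (hd : 2 ^ d * 512 ≤ Q) :
    volume (Icc a b ∩ nearFractions 1 (2 ^ d) fun q => 1 / (q * Q)) ≤
      ENNReal.ofReal ((b - a) / 16) := by
  have hanti : AntitoneOn (fun q : ℝ => 1 / (q * Q)) (Ioi 0) := fun q (hq : 0 < q) r _ hqr => by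
    dsimp only
    gcongr
  have hinv : 4 / Q ≤ (b - a) / 32 := by
    rw [div_le_div_iff₀ hQ (by norm_num)]
    linarith
  have hlen := sub_nonneg.2 hab
  have hvol := volume_nearFractions_two_pow_mul_le hab one_pos (fun q hq => by positivity) hanti
    (by rw [one_mul, mul_one_div]; linarith [show 4 / Q = 2 * (2 / Q) by ring]) d
  simp only [mul_one] at hvol
  refine hvol.trans (ENNReal.ofReal_le_ofReal ?_)
  have hpow : ∑ j ∈ Finset.range d, (2 : ℝ) ^ j ≤ 2 ^ d := by
    rw [geom_sum_eq (by norm_num)]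
    norm_num
  calc _ = 2 / Q * ∑ j ∈ Finset.range d, (1 / 2) ^ j +
        16 * (b - a) / Q * ∑ j ∈ Finset.range d, (2 : ℝ) ^ j := by
        rw [Finset.mul_sum, Finset.mul_sum, ← Finset.sum_add_distrib]
        refine Finset.sum_congr rfl fun j _ => ?_
        rw [one_div_pow]
        field_simp
    _ ≤ 2 / Q * 2 + 16 * (b - a) / Q * (Q / 512) := by
        gcongr
        · exact sum_geometric_two_le d
        · linarith
    _ = 4 / Q + (b - a) / 32 := by field_simp; ring
    _ ≤ (b - a) / 16 := by linarith

theorem volume_nearFractions_four_mul_le {f : ℝ → ℝ} {a b R ε : ℝ} (hab : a ≤ b) (hR : 0 < R)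
    (hf : ∀ q, 0 < q → 0 ≤ f q) (hmono : AntitoneOn (fun q => q ^ 2 * f q) (Ioi 0))
    (hfR : 8 * f R ≤ b - a) {N : ℕ}
    (htail : ∑ j ∈ Finset.range N, (2 ^ j * R) ^ 2 * f (2 ^ j * R) ≤ ε) :
    volume (Icc a b ∩ nearFractions R (2 ^ N * R) fun q => 4 * f q) ≤
      ENNReal.ofReal (16 * f R + 64 * (b - a) * ε) := by
  have hanti := antitoneOn_of_sq_mul hf hmono
  refine (volume_nearFractions_two_pow_mul_le hab hR
    (fun q hq => mul_nonneg zero_le_four (hf q hq))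
    (fun q hq r hr hqr => mul_le_mul_of_nonneg_left (hanti hq hr hqr) zero_le_four)
    (by linarith) N).trans (ENNReal.ofReal_le_ofReal ?_)
  have hfR₀ := hf R hR
  calc _ = 8 * ∑ j ∈ Finset.range N, f (2 ^ j * R) +
        64 * (b - a) * ∑ j ∈ Finset.range N, (2 ^ j * R) ^ 2 * f (2 ^ j * R) := by
        rw [Finset.mul_sum, Finset.mul_sum, ← Finset.sum_add_distrib]
        exact Finset.sum_congr rfl fun j _ => by ring
    _ ≤ 8 * ∑ j ∈ Finset.range N, f R * (1 / 2) ^ j + 64 * (b - a) * ε := by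
        gcongr with j
        exact apply_two_pow_mul_le hR hf hmono j
    _ ≤ 8 * (f R * 2) + 64 * (b - a) * ε := by
        rw [← Finset.mul_sum]
        gcongr
        exact sum_geometric_two_le N
    _ = 16 * f R + 64 * (b - a) * ε := by ring

theorem ratCast_ne_div_of_lt_den {r : ℚ} {p : ℤ} {q : ℕ} (hq : 0 < q) (hqr : q < r.den) :
    (r : ℝ) ≠ p / q := by
  intro h
  obtain ⟨r', hr', hden⟩ := div_mem_boundedFractions (p := p) hq le_rfl
  have hrr' : r' = r := by exact_mod_cast hr'.trans h.symm
  exact absurd hqr (not_lt.2 (by exact_mod_cast hrr' ▸ hden))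

theorem exists_rat_of_notMem_nearFractions {x D : ℝ} {Q : ℕ} (hQ : 0 < Q)
    (hx : x ∉ nearFractions 1 D fun q => 1 / (q * Q)) :
    ∃ r : ℚ, D ≤ r.den ∧ r.den ≤ Q ∧ |x - r| ≤ 1 / (r.den * Q) := by
  obtain ⟨r, hr, hrQ⟩ := Real.exists_rat_abs_sub_le_and_den_le x hQ
  have hxr : |x - r| ≤ 1 / (r.den * Q) := hr.trans <| by
    rw [mul_comm]
    gcongr
    linarith
  refine ⟨r, not_lt.1 fun hlt => hx ⟨r.num, r.den, ?_, hlt, ?_⟩, hrQ, hxr⟩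
  · exact_mod_cast r.den_pos
  · rwa [← Rat.cast_def]

theorem two_mul_lt_abs_sub_of_notMem_nearFractions {f : ℝ → ℝ} {x A B : ℝ} {Q : ℕ} {r : ℚ}
    (hrQ : r.den ≤ Q) (hQB : Q ≤ B) (hxr : |x - r| ≤ 1 / (r.den * Q))
    (hx : x ∉ nearFractions A B fun q => 4 * f q) {p : ℤ} {q : ℕ} (hq : 0 < q) (hAq : A ≤ q)
    (hqr : q < r.den) : 2 * f q < |(r : ℝ) - p / q| := by
  by_contra! hle
  have hqQ : (q : ℝ) < Q := by exact_mod_cast hqr.trans_le hrQ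
  have hgap : 1 / ((r.den : ℝ) * q) ≤ |(r : ℝ) - p / q| := by
    have hne := ratCast_ne_div_of_lt_den (p := p) hq hqr
    rw [Rat.cast_def] at hne ⊢
    exact one_div_mul_le_abs_sub r.den_pos hq hne
  refine hx ⟨p, q, hAq, hqQ.trans_le hQB, ?_⟩
  calc |x - p / q| ≤ |x - r| + |(r : ℝ) - p / q| := abs_sub_le _ _ _
    _ ≤ 1 / (r.den * q) + |(r : ℝ) - p / q| := by
        gcongr
        refine hxr.trans ?_
        gcongr
    _ ≤ 4 * f q := by linarith

/-- The rationals `y ∈ [a, b]`, of reduced denominator between `Q / 1024` and `Q`, whose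
`Ψ`-neighbourhood on the right stays in `[a, b]` and which are at distance more than `2 Ψ q` from
every `p / q` with `q` at least `R` and less than the denominator of `y`. They are the candidates
for the centres of the next generation of a Cantor set in `E(Ψ, ω)`. -/
def goodCenters (Ψ : ℝ → ℝ) (a b R : ℝ) (Q : ℕ) : Set ℝ :=
  {y | ∃ r : ℚ, r = y ∧ (Q : ℝ) ≤ 1024 * r.den ∧ r.den ≤ Q ∧ a ≤ y ∧ y + Ψ r.den ≤ b ∧
    ∀ (p : ℤ) (q : ℕ), R ≤ q → q < r.den → 2 * Ψ q < |y - p / q|}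

section GoodCenters

variable {Ψ : ℝ → ℝ} {a b R : ℝ} {Q : ℕ}

theorem goodCenters_subset (hΨ : ∀ q, 0 < q → 0 ≤ Ψ q) :
    goodCenters Ψ a b R Q ⊆ boundedFractions Q ∩ Icc a b := by
  rintro y ⟨r, hr, -, hrQ, ha, hb, -⟩
  have := hΨ r.den (by exact_mod_cast r.den_pos)
  exact ⟨⟨r, hr, by exact_mod_cast hrQ⟩, ha, by linarith⟩

theorem goodCenters_separated (hΨ : ∀ q, 0 < q → 0 ≤ Ψ q) :
    (goodCenters Ψ a b R Q).Pairwise fun x y => 1 / (Q : ℝ) ^ 2 ≤ |x - y| :=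
  (boundedFractions_separated Q).mono ((goodCenters_subset hΨ).trans inter_subset_left)

theorem goodCenters_finite (hΨ : ∀ q, 0 < q → 0 ≤ Ψ q) (hQ : 0 < Q) :
    (goodCenters Ψ a b R Q).Finite :=
  finite_of_separated (by positivity) (goodCenters_separated hΨ)
    ((goodCenters_subset hΨ).trans inter_subset_right)

theorem Icc_subset_union_goodCenters (hΨ : ∀ q, 0 < q → 0 ≤ Ψ q) (hanti : AntitoneOn Ψ (Ioi 0))
    (hR : 0 < R) (hΨR : 45 * Ψ R ≤ 2 * (b - a)) (hRQ : 1024 * R ≤ Q) (hQ : 0 < Q)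
    (hQab : 2 ^ 18 ≤ (Q : ℝ) ^ 2 * (b - a)) {d N : ℕ} (hd : (Q : ℝ) ≤ 1024 * 2 ^ d)
    (hN : Q ≤ 2 ^ N * R) :
    Icc (a + (b - a) / 20) (b - (b - a) / 20) ⊆
      (Icc a b ∩ nearFractions 1 (2 ^ d) fun q => 1 / (q * Q)) ∪
      (Icc a b ∩ nearFractions R (2 ^ N * R) fun q => 4 * Ψ q) ∪
      ⋃ y ∈ goodCenters Ψ a b R Q, Metric.closedBall y (1024 / (Q : ℝ) ^ 2) := by
  have hlen : 0 ≤ b - a := by linarith [hΨ R hR]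
  intro x hx
  have hxab : x ∈ Icc a b := ⟨by linarith [hx.1], by linarith [hx.2]⟩
  by_contra hcon
  simp only [mem_union, mem_inter_iff, hxab, true_and, mem_iUnion, not_or, not_exists] at hcon
  obtain ⟨⟨hsmall, hmiddle⟩, hfar⟩ := hcon
  obtain ⟨r, hdr, hrQ, hxr⟩ := exists_rat_of_notMem_nearFractions hQ hsmall
  have hQr : (Q : ℝ) ≤ 1024 * r.den := by linarith
  have hRr : R ≤ r.den := by linarith
  have hden : (0 : ℝ) < r.den := hR.trans_le hRr
  have hdist : |x - r| ≤ 1024 / (Q : ℝ) ^ 2 := by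
    refine hxr.trans ?_
    rw [div_le_div_iff₀ (by positivity) (by positivity)]
    nlinarith
  have hdist' : 1024 / (Q : ℝ) ^ 2 ≤ (b - a) / 180 := by
    rw [div_le_div_iff₀ (by positivity) (by norm_num)]
    linarith
  have hΨr : Ψ r.den ≤ 2 * (b - a) / 45 := by linarith [hanti hR hden hRr]
  obtain ⟨hleft, hright⟩ := abs_le.1 (hdist.trans hdist')
  refine hfar r ⟨r, rfl, hQr, hrQ, by linarith [hx.1], by linarith [hx.2], fun p q hRq hqr => ?_⟩
    (Metric.mem_closedBall.2 hdist)
  exact two_mul_lt_abs_sub_of_notMem_nearFractions hrQ hN hxr hmiddle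
    (by exact_mod_cast hR.trans_le hRq) hRq hqr

/-- Covering the middle nine tenths of `[a, b]`: points with a Dirichlet approximation of small
denominator take up at most a sixteenth of `b - a`, points near a rational of intermediate
denominator at most `16 Ψ R + (b - a) / 16`, and here `45 Ψ R ≤ 2 (b - a)` leaves room. -/
theorem mul_sq_le_ncard_goodCenters (hΨ : ∀ q, 0 < q → 0 ≤ Ψ q)
    (hmono : AntitoneOn (fun q => q ^ 2 * Ψ q) (Ioi 0)) (hab : a ≤ b) (hR : 0 < R)
    (hΨR : 45 * Ψ R ≤ 2 * (b - a))
    (htail : ∀ N : ℕ, ∑ j ∈ Finset.range N, (2 ^ j * R) ^ 2 * Ψ (2 ^ j * R) ≤ 1 / 2 ^ 10)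
    (hRQ : 1024 * R ≤ Q) (hQ : 512 ≤ Q) (hQab : 2 ^ 18 ≤ Q * (b - a)) :
    (b - a) * Q ^ 2 / 2 ^ 15 ≤ (goodCenters Ψ a b R Q).ncard := by
  have hQ₁ : (512 : ℝ) ≤ Q := by exact_mod_cast hQ
  have hQ₀ : (0 : ℝ) < Q := by linarith
  obtain ⟨d, hd, hd'⟩ := exists_nat_pow_near (x := (Q : ℝ) / 512) (y := 2)
    (by rw [le_div_iff₀ (by norm_num)]; linarith) one_lt_two
  rw [le_div_iff₀ (by norm_num)] at hd
  rw [div_lt_iff₀ (by norm_num), pow_succ] at hd'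
  obtain ⟨N, hN⟩ := pow_unbounded_of_one_lt ((Q : ℝ) / R) one_lt_two
  rw [div_lt_iff₀ hR] at hN
  have hfin := goodCenters_finite (a := a) (b := b) (R := R) (Q := Q) hΨ (by omega)
  have hcover := Icc_subset_union_goodCenters hΨ (antitoneOn_of_sq_mul hΨ hmono) hR hΨR hRQ
    (by omega) (by nlinarith) (d := d) (by linarith) hN.le
  have hsmall := volume_nearFractions_one_div_le hab hQ₀ (by linarith) hd
  have hmiddle := volume_nearFractions_four_mul_le hab hR hΨ hmono (by linarith) (htail N)
  have hgood := volume_iUnion_closedBall_le hfin.toFinset (r := 1024 / (Q : ℝ) ^ 2)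
  simp only [hfin.mem_toFinset, ← ncard_eq_toFinset_card _ hfin] at hgood
  have hΨR₀ := hΨ R hR
  have hvol : 9 / 10 * (b - a) ≤ (b - a) / 16 + (16 * Ψ R + 64 * (b - a) * (1 / 2 ^ 10)) +
      (goodCenters Ψ a b R Q).ncard * (2 * (1024 / (Q : ℝ) ^ 2)) := by
    rw [← ENNReal.ofReal_le_ofReal_iff (by positivity), ENNReal.ofReal_add (by positivity)
      (by positivity), ENNReal.ofReal_add (by positivity) (by positivity)]
    calc ENNReal.ofReal (9 / 10 * (b - a))
        = volume (Icc (a + (b - a) / 20) (b - (b - a) / 20)) := by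
          rw [Real.volume_Icc]
          ring_nf
      _ ≤ _ := (measure_mono hcover).trans <| (measure_union_le _ _).trans <|
          add_le_add ((measure_union_le _ _).trans (add_le_add hsmall hmiddle)) hgood
  have hcount : (b - a) / 16 ≤ (goodCenters Ψ a b R Q).ncard * (2 * (1024 / (Q : ℝ) ^ 2)) := by
    linarith
  rw [← mul_assoc, mul_div_assoc', le_div_iff₀ (by positivity)] at hcount
  linarith

end GoodCenters

/-! ### Lower bound -/

/-- Otherwise `ρ q ^ s < C / q²` eventually, and `q ρ(q) ^ s'` is at most a constant times
`q ^ (1 - 2 s' / s)`, whose exponent is less than `-1`. -/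
theorem frequently_le_sq_mul_rpow_of_not_summable {ρ : ℕ → ℝ} (hρ : ∀ q, 0 < q → 0 ≤ ρ q)
    {s s' : ℝ} (hs : 0 < s) (hss' : s < s') (hns : ¬ Summable fun q : ℕ => (q : ℝ) * ρ q ^ s')
    (C : ℝ) : ∃ᶠ q : ℕ in atTop, C ≤ (q : ℝ) ^ 2 * ρ q ^ s := by
  intro hcon
  have hratio : 1 < s' / s := (one_lt_div hs).2 hss'
  have hdom : Summable fun q : ℕ => |C| ^ (s' / s) * (q : ℝ) ^ (1 - 2 * (s' / s)) :=
    (Real.summable_nat_rpow.2 (by linarith)).mul_left _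
  refine hns (Summable.of_norm_bounded_eventually_nat hdom ?_)
  filter_upwards [hcon, eventually_gt_atTop 0] with q hq hq₀
  have hqpos : (0 : ℝ) < q := by exact_mod_cast hq₀
  have hρq := hρ q hq₀
  have hρs : ρ q ^ s ≤ |C| / (q : ℝ) ^ 2 := by
    rw [le_div_iff₀ (by positivity)]
    linarith [le_abs_self C]
  rw [Real.norm_of_nonneg (by positivity)]
  calc (q : ℝ) * ρ q ^ s' = q * (ρ q ^ s) ^ (s' / s) := by
        rw [← Real.rpow_mul hρq, mul_div_cancel₀ _ hs.ne']
    _ ≤ q * (|C| / (q : ℝ) ^ 2) ^ (s' / s) := by gcongr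
    _ = |C| ^ (s' / s) * (q : ℝ) ^ (1 - 2 * (s' / s)) := by
        rw [Real.div_rpow (abs_nonneg _) (by positivity), Real.rpow_sub hqpos, Real.rpow_one,
          ← Real.rpow_natCast, ← Real.rpow_mul hqpos.le]
        push_cast
        ring

/-- The standing assumptions of the Cantor construction: those of the dimension formula with
`ω ≤ 1 / 2`, the asymptotic ones being in force from the threshold `R₀` on. The last one carries a
factor `2` to spare, which allows `ω` to be replaced by `ω / 2`. -/
structure AdmissiblePair (Ψ ω : ℝ → ℝ) (R₀ : ℝ) : Prop where
  one_le : 1 ≤ R₀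
  psi_pos : ∀ q, 0 < q → 0 < Ψ q
  omega_mem : ∀ q, 0 < q → ω q ∈ Ioc 0 (1 / 2)
  antitone_sq_mul_psi : AntitoneOn (fun q => q ^ 2 * Ψ q) (Ioi 0)
  antitone_sq_mul_length : AntitoneOn (fun q => q ^ 2 * (Ψ q * ω q)) (Ioi 0)
  dyadic_sum_le : ∀ R, R₀ ≤ R → ∀ N : ℕ,
    ∑ j ∈ Finset.range N, (2 ^ j * R) ^ 2 * Ψ (2 ^ j * R) ≤ 1 / 2 ^ 22
  psi_threshold_le : ∀ q, R₀ ≤ q → 45 * Ψ (1 / (2 * q * Ψ q)) ≤ 2 * (Ψ q * ω q)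

/-- A basic interval `[left, right]` of the Cantor construction, with its mass. Denominators in
`[R₀, threshold)` have been dealt with at earlier stages, and those from `threshold` on are still
free. -/
structure Node (Ψ : ℝ → ℝ) (s R₀ : ℝ) where
  left : ℝ
  right : ℝ
  threshold : ℝ
  mass : ℝ
  left_lt_right : left < right
  le_threshold : R₀ ≤ threshold
  psi_threshold_le : 45 * Ψ threshold ≤ 2 * (right - left)
  mass_pos : 0 < mass
  mass_le_rpow : mass ≤ (right - left) ^ s

/-- `τ` is an admissible child of `σ`: its points lie in `σ`, are `Ψ`-close to a rational of
denominator at least `σ.threshold`, and are `(1 - ω) Ψ`-far from all rationals with denominator in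
`[σ.threshold, τ.threshold)`. -/
structure Node.IsChild {Ψ : ℝ → ℝ} {s R₀ : ℝ} (ω : ℝ → ℝ) (σ τ : Node Ψ s R₀) : Prop where
  Icc_subset : Icc τ.left τ.right ⊆ Icc σ.left σ.right
  threshold_add_one_le : σ.threshold + 1 ≤ τ.threshold
  exists_close : ∃ (p : ℤ) (q : ℕ), σ.threshold ≤ q ∧
    ∀ x ∈ Icc τ.left τ.right, |x - p / q| ≤ Ψ q
  far : ∀ (p : ℤ) (q : ℕ), σ.threshold ≤ q → q < τ.threshold →
    ∀ x ∈ Icc τ.left τ.right, (1 - ω q) * Ψ q ≤ |x - p / q|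

/-- The ranges `[R, R')` between the thresholds of consecutive nodes exhaust all large
denominators. -/
theorem mem_ESet_of_branch {Ψ ω : ℝ → ℝ} {s R₀ : ℝ} (hR₀ : 0 < R₀) {x : ℝ} (τ : ℕ → Node Ψ s R₀)
    (hτ : ∀ n, (τ n).IsChild ω (τ (n + 1))) (hx : ∀ n, x ∈ Icc (τ n).left (τ n).right) :
    x ∈ ESet Ψ ω := by
  have hgrow : ∀ n : ℕ, (n : ℝ) ≤ (τ n).threshold := by
    intro n
    induction n with
    | zero => simpa using hR₀.le.trans (τ 0).le_threshold
    | succ n ih =>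
      push_cast
      linarith [(hτ n).threshold_add_one_le]
  have hlarge : ∀ N : ℕ, ∃ n, (N : ℝ) < (τ n).threshold := fun N =>
    ⟨N + 1, lt_of_lt_of_le (by exact_mod_cast N.lt_succ_self) (hgrow (N + 1))⟩
  refine ⟨.of_image Prod.snd (infinite_of_not_bddAbove ?_), ⌈(τ 0).threshold⌉₊, fun q hq p => ?_⟩
  · rintro ⟨M, hM⟩
    obtain ⟨n, hn⟩ := hlarge M
    obtain ⟨p, q, hq, hclose⟩ := (hτ n).exists_close
    have hq₀ : (0 : ℝ) < q := (hR₀.trans_le (τ n).le_threshold).trans_le hq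
    have hqM : q ≤ M := hM ⟨(p, q), ⟨by exact_mod_cast hq₀, hclose x (hx _)⟩, rfl⟩
    exact (hn.trans_le hq).not_ge (by exact_mod_cast hqM)
  · have hunbdd : ¬ BddAbove (range fun n => (τ n).threshold) := by
      rintro ⟨B, hB⟩
      obtain ⟨N, hN⟩ := exists_nat_gt B
      obtain ⟨n, hn⟩ := hlarge N
      linarith [hB (mem_range_self n)]
    have hmono : Monotone fun n => (τ n).threshold := monotone_nat_of_le_succ fun n => by
      linarith [(hτ n).threshold_add_one_le]
    have hcover := iUnion_Ico_map_succ_eq_Ici (f := fun n => (τ n).threshold)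
      (fun n => hmono bot_le) hunbdd
    obtain ⟨n, hn⟩ := mem_iUnion.1 (hcover ▸ mem_Ici.2 (Nat.ceil_le.1 hq) : (q : ℝ) ∈ _)
    exact (hτ n).far p q hn.1 hn.2 x (hx _)

theorem Node.exists_denominator_bound {Ψ ω : ℝ → ℝ} {s R₀ : ℝ} (σ : Node Ψ s R₀)
    (hfreq : ∀ C : ℝ, ∃ᶠ Q : ℕ in atTop, C ≤ (Q : ℝ) ^ 2 * (Ψ Q * ω Q) ^ s) :
    ∃ Q : ℕ, 1024 * (σ.threshold + 1) ≤ Q ∧ 2 ^ 18 ≤ Q * (σ.right - σ.left) ∧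
      2 ^ 15 * σ.mass ≤ (σ.right - σ.left) * Q ^ 2 * (Ψ Q * ω Q) ^ s := by
  have hlen : 0 < σ.right - σ.left := sub_pos.2 σ.left_lt_right
  have htop := tendsto_natCast_atTop_atTop (R := ℝ)
  obtain ⟨Q, hmass, hthreshold, hlarge⟩ :=
    ((hfreq (2 ^ 15 * σ.mass / (σ.right - σ.left))).and_eventually
      ((htop.eventually_ge_atTop (1024 * (σ.threshold + 1))).and
        (htop.eventually_ge_atTop (2 ^ 18 / (σ.right - σ.left))))).exists
  rw [div_le_iff₀ hlen] at hmass hlarge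
  exact ⟨Q, hthreshold, hlarge, by linarith⟩

namespace AdmissiblePair

variable {Ψ ω : ℝ → ℝ} {s R₀ : ℝ} (h : AdmissiblePair Ψ ω R₀)
include h

theorem psi_nonneg : ∀ q, 0 < q → 0 ≤ Ψ q := fun q hq => (h.psi_pos q hq).le

theorem length_pos {q : ℝ} (hq : 0 < q) : 0 < Ψ q * ω q :=
  mul_pos (h.psi_pos q hq) (h.omega_mem q hq).1

theorem psi_antitoneOn : AntitoneOn Ψ (Ioi 0) :=
  antitoneOn_of_sq_mul h.psi_nonneg h.antitone_sq_mul_psi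

theorem length_antitoneOn : AntitoneOn (fun q => Ψ q * ω q) (Ioi 0) :=
  antitoneOn_of_sq_mul (fun _ hq => (h.length_pos hq).le) h.antitone_sq_mul_length

theorem sq_mul_psi_le {q : ℝ} (hq : R₀ ≤ q) : q ^ 2 * Ψ q ≤ 1 / 2 ^ 22 := by
  simpa using h.dyadic_sum_le q hq 1

theorem one_sub_mul_le_of_dvd {q q' : ℕ} (hq : R₀ ≤ q) (hq' : 0 < q') (hdvd : q ∣ q') :
    (1 - ω q') * Ψ q' ≤ (1 - ω q) * Ψ q := by
  obtain ⟨k, rfl⟩ := hdvd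
  have hq₀ : (0 : ℝ) < q := by linarith [h.one_le]
  have hqk : (0 : ℝ) < (q * k : ℕ) := by exact_mod_cast hq'
  obtain rfl | hk : k = 1 ∨ 2 ≤ k := by have := Nat.pos_of_mul_pos_left hq'; omega
  · rw [mul_one]
  have hle : 2 * (q : ℝ) ≤ (q * k : ℕ) := by rw [mul_comm]; exact_mod_cast Nat.mul_le_mul_left q hk
  calc (1 - ω (q * k : ℕ)) * Ψ (q * k : ℕ) ≤ Ψ (q * k : ℕ) :=
        mul_le_of_le_one_left (h.psi_nonneg _ hqk) (by linarith [(h.omega_mem _ hqk).1])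
    _ ≤ Ψ (2 * q) := h.psi_antitoneOn (mem_Ioi.2 (by positivity)) hqk hle
    _ ≤ 1 / 2 * Ψ q := by
        simpa [mul_comm] using apply_two_pow_mul_le hq₀ h.psi_nonneg h.antitone_sq_mul_psi 1
    _ ≤ (1 - ω q) * Ψ q := by
        have := (h.omega_mem q hq₀).2
        have := h.psi_pos q hq₀
        gcongr
        linarith

theorem le_one_div_two_mul_psi {q : ℝ} (hq : R₀ ≤ q) : q ≤ 1 / (2 * q * Ψ q) := by
  have hq₀ : 0 < q := by linarith [h.one_le]
  have := h.psi_pos q hq₀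
  rw [le_div_iff₀ (by positivity)]
  linarith [h.sq_mul_psi_le hq]

theorem two_mul_psi_le_abs_sub {r : ℚ} {p : ℤ} {q : ℕ} (hq : 0 < q)
    (hq' : q < 1 / (2 * r.den * Ψ r.den)) (hne : (r : ℝ) ≠ p / q) :
    2 * Ψ r.den ≤ |(r : ℝ) - p / q| := by
  have hq₀ : (0 : ℝ) < q := by exact_mod_cast hq
  have hden : (0 : ℝ) < r.den := by exact_mod_cast r.den_pos
  have hpsi := h.psi_pos _ hden
  rw [Rat.cast_def] at hne ⊢
  refine le_trans ?_ (one_div_mul_le_abs_sub r.den_pos hq hne)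
  rw [lt_div_iff₀ (by positivity)] at hq'
  rw [le_div_iff₀ (by positivity)]
  linarith

/-- Denominators below `r.den` are avoided because `r` is a good centre, those between `r.den` and
`1 / (2 r.den Ψ(r.den))` because distinct fractions are far apart, and non-reduced representations
of `r` itself are harmless because `Ψ (2 q) ≤ Ψ q / 2`. -/
theorem one_sub_mul_le_abs_sub {r : ℚ} (hr : R₀ ≤ r.den) {R : ℝ}
    (hgood : ∀ (p : ℤ) (q : ℕ), R ≤ q → q < r.den → 2 * Ψ q < |(r : ℝ) - p / q|) {x : ℝ}
    (hx : x ∈ Icc (r + (1 - ω r.den) * Ψ r.den) (r + Ψ r.den)) {p : ℤ} {q : ℕ} (hq : 0 < q)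
    (hRq : R ≤ q) (hq' : q < 1 / (2 * r.den * Ψ r.den)) : (1 - ω q) * Ψ q ≤ |x - p / q| := by
  have hq₀ : (0 : ℝ) < q := by exact_mod_cast hq
  have hden : (0 : ℝ) < r.den := by exact_mod_cast r.den_pos
  have hle : (1 - ω q) * Ψ q ≤ Ψ q :=
    mul_le_of_le_one_left (h.psi_nonneg _ hq₀) (by linarith [(h.omega_mem _ hq₀).1])
  have hx₀ : 0 ≤ x - r := by
    have : 0 ≤ 1 - ω r.den := by linarith [(h.omega_mem _ hden).2]
    linarith [hx.1, mul_nonneg this (h.psi_nonneg _ hden)]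
  have htri : |(r : ℝ) - p / q| ≤ Ψ r.den + |x - p / q| := by
    have := abs_sub_le (r : ℝ) x (p / q)
    rw [abs_sub_comm (r : ℝ) x, abs_of_nonneg hx₀] at this
    linarith [hx.2]
  by_cases heq : (r : ℝ) = p / q
  · have hdvd : r.den ∣ q := by
      have hr' : r = Rat.divInt p q := by
        rw [Rat.divInt_eq_div]
        exact_mod_cast heq
      rw [hr']
      exact_mod_cast Rat.den_dvd p q
    rw [← heq, abs_of_nonneg hx₀]
    linarith [h.one_sub_mul_le_of_dvd hr hq hdvd, hx.1]
  have hfar := h.two_mul_psi_le_abs_sub hq hq' heq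
  rcases lt_or_ge q r.den with hlt | hge
  · linarith [hgood p q hRq hlt, h.psi_antitoneOn hq₀ hden (by exact_mod_cast hlt.le)]
  · linarith [h.psi_antitoneOn hden hq₀ (by exact_mod_cast hge)]

/-- The node carried by a rational `r` with large denominator `q`: the right half
`[r + (1 - ω q) Ψ q, r + Ψ q]` of the annulus around `r`, with threshold `1 / (2 q Ψ q)` and a
prescribed mass. -/
noncomputable def node (r : ℚ) (hr : R₀ ≤ r.den) {w : ℝ} (hw₀ : 0 < w)
    (hw : w ≤ (Ψ r.den * ω r.den) ^ s) : Node Ψ s R₀ where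
  left := r + (1 - ω r.den) * Ψ r.den
  right := r + Ψ r.den
  threshold := 1 / (2 * r.den * Ψ r.den)
  mass := w
  left_lt_right := by
    linarith [h.length_pos (q := r.den) (by exact_mod_cast r.den_pos)]
  le_threshold := hr.trans (h.le_one_div_two_mul_psi hr)
  psi_threshold_le := by
    linarith [h.psi_threshold_le _ hr]
  mass_pos := hw₀
  mass_le_rpow := by
    convert hw using 2
    ring

theorem isChild_node {σ : Node Ψ s R₀} {r : ℚ} (hr : R₀ ≤ r.den) {w : ℝ} (hw₀ : 0 < w)
    (hw : w ≤ (Ψ r.den * ω r.den) ^ s) (hσr : σ.threshold + 1 ≤ r.den) (hleft : σ.left ≤ r)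
    (hright : r + Ψ r.den ≤ σ.right)
    (hgood : ∀ (p : ℤ) (q : ℕ), σ.threshold ≤ q → q < r.den → 2 * Ψ q < |(r : ℝ) - p / q|) :
    σ.IsChild ω (h.node r hr hw₀ hw) := by
  have hden : (0 : ℝ) < r.den := by exact_mod_cast r.den_pos
  have hinner : 0 ≤ (1 - ω r.den) * Ψ r.den :=
    mul_nonneg (by linarith [(h.omega_mem _ hden).2]) (h.psi_nonneg _ hden)
  refine ⟨Icc_subset_Icc (le_add_of_le_of_nonneg hleft hinner) hright,
    hσr.trans (h.le_one_div_two_mul_psi hr), ⟨r.num, r.den, by linarith, fun x hx => ?_⟩,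
    fun p q hσq hq x hx => ?_⟩
  · have hx₁ : r + (1 - ω r.den) * Ψ r.den ≤ x := hx.1
    have hx₂ : x ≤ r + Ψ r.den := hx.2
    rw [← Rat.cast_def, abs_le]
    constructor <;> linarith
  · have hq₀ : (0 : ℝ) < q := by linarith [σ.le_threshold, h.one_le]
    exact h.one_sub_mul_le_abs_sub hr hgood hx (by exact_mod_cast hq₀) hσq hq

theorem exists_isChild_of_mem_goodCenters (hs : 0 ≤ s) {σ : Node Ψ s R₀} {Q : ℕ}
    (hσQ : 1024 * (σ.threshold + 1) ≤ Q) {w : ℝ} (hw₀ : 0 < w) (hw : w ≤ (Ψ Q * ω Q) ^ s) {y : ℝ}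
    (hy : y ∈ goodCenters Ψ σ.left σ.right σ.threshold Q) :
    ∃ τ : Node Ψ s R₀, σ.IsChild ω τ ∧ τ.mass = w ∧
      y ≤ τ.left ∧ τ.right ≤ y + 1 / (2 * (Q : ℝ) ^ 2) := by
  obtain ⟨r, rfl, hQr, hrQ, hleft, hright, hgood⟩ := hy
  have hden : (0 : ℝ) < r.den := by exact_mod_cast r.den_pos
  have hrQ' : (r.den : ℝ) ≤ Q := by exact_mod_cast hrQ
  have hQ : (0 : ℝ) < Q := hden.trans_le hrQ'
  have hσr : σ.threshold + 1 ≤ r.den := by linarith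
  have hr : R₀ ≤ r.den := by linarith [σ.le_threshold]
  have hw' : w ≤ (Ψ r.den * ω r.den) ^ s := hw.trans <|
    Real.rpow_le_rpow (h.length_pos hQ).le (h.length_antitoneOn hden hQ hrQ') hs
  refine ⟨h.node r hr hw₀ hw', h.isChild_node hr hw₀ hw' hσr hleft hright hgood, rfl,
    le_add_of_nonneg_right ?_, add_le_add_right ?_ _⟩
  · exact mul_nonneg (by linarith [(h.omega_mem _ hden).2]) (h.psi_nonneg _ hden)
  · rw [le_div_iff₀ (by positivity)]
    calc Ψ r.den * (2 * (Q : ℝ) ^ 2) ≤ Ψ r.den * (2 * (1024 * r.den) ^ 2) := by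
          have := h.psi_nonneg _ hden
          gcongr
      _ ≤ 1 := by linarith [h.sq_mul_psi_le hr]

theorem exists_enum_goodCenters
    (hfreq : ∀ C : ℝ, ∃ᶠ Q : ℕ in atTop, C ≤ (Q : ℝ) ^ 2 * (Ψ Q * ω Q) ^ s) (σ : Node Ψ s R₀) :
    ∃ (Q m : ℕ) (y : ℕ → ℝ), 1024 * (σ.threshold + 1) ≤ Q ∧ 2 ≤ m ∧
      (σ.right - σ.left) * Q ^ 2 / 2 ^ 15 ≤ m ∧ σ.mass / m ≤ (Ψ Q * ω Q) ^ s ∧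
      (∀ i < m, y i ∈ goodCenters Ψ σ.left σ.right σ.threshold Q) ∧
      ∀ i j : ℕ, i ≤ j → j < m → ((j : ℝ) - i) * (1 / (Q : ℝ) ^ 2) ≤ y j - y i := by
  obtain ⟨Q, hσQ, hQlen, hQmass⟩ := σ.exists_denominator_bound hfreq
  have hσ₀ : 0 < σ.threshold := by linarith [h.one_le, σ.le_threshold]
  have hQ : 512 ≤ Q := by
    have : (512 : ℝ) ≤ Q := by linarith
    exact_mod_cast this
  have hQ₀ : (0 : ℝ) < Q := by linarith
  have hfin := goodCenters_finite (a := σ.left) (b := σ.right) (R := σ.threshold)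
    h.psi_nonneg (by omega : 0 < Q)
  have hcard := mul_sq_le_ncard_goodCenters h.psi_nonneg h.antitone_sq_mul_psi
    σ.left_lt_right.le hσ₀ σ.psi_threshold_le
    (fun N => (h.dyadic_sum_le _ σ.le_threshold N).trans (by norm_num)) (by linarith) hQ hQlen
  rw [ncard_eq_toFinset_card _ hfin] at hcard
  obtain ⟨y, hy, hsep⟩ := exists_enum_of_separated (g := 1 / (Q : ℝ) ^ 2) hfin.toFinset
    (hfin.coe_toFinset ▸ goodCenters_separated h.psi_nonneg)
  have hm : (2 : ℝ) ≤ hfin.toFinset.card := by nlinarith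
  refine ⟨Q, _, y, hσQ, by exact_mod_cast hm, hcard, ?_,
    fun i hi => hfin.mem_toFinset.1 (hy i hi), hsep⟩
  rw [div_le_iff₀ (by linarith)]
  have := Real.rpow_nonneg (h.length_pos hQ₀).le s
  nlinarith

theorem exists_children (hs : 0 ≤ s)
    (hfreq : ∀ C : ℝ, ∃ᶠ Q : ℕ in atTop, C ≤ (Q : ℝ) ^ 2 * (Ψ Q * ω Q) ^ s) (σ : Node Ψ s R₀) :
    ∃ m : ℕ, 2 ≤ m ∧ ∃ f : ℕ → Node Ψ s R₀,
      (∀ i < m, σ.IsChild ω (f i) ∧ (f i).mass = σ.mass / m) ∧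
      ∀ i j : ℕ, i < j → j < m →
        1 / 2 ^ 16 * ((j : ℝ) - i) * ((σ.right - σ.left) / m) ≤ (f j).left - (f i).right := by
  obtain ⟨Q, m, y, hσQ, hm, hcard, hmass, hy, hsep⟩ := h.exists_enum_goodCenters hfreq σ
  have hm₀ : (0 : ℝ) < m := by exact_mod_cast two_pos.trans_le hm
  have hQ₀ : (0 : ℝ) < Q := by linarith [h.one_le, σ.le_threshold]
  have : Nonempty (Node Ψ s R₀) := ⟨σ⟩
  have hchild := fun i (hi : i < m) => h.exists_isChild_of_mem_goodCenters hs hσQ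
    (div_pos σ.mass_pos hm₀) hmass (hy i hi)
  choose! f hf hfmass hleft hright using hchild
  refine ⟨m, hm, f, fun i hi => ⟨hf i hi, hfmass i hi⟩, fun i j hij hj => ?_⟩
  have hij' : (i : ℝ) + 1 ≤ j := by exact_mod_cast hij
  calc 1 / 2 ^ 16 * ((j : ℝ) - i) * ((σ.right - σ.left) / m)
      ≤ 1 / 2 ^ 16 * ((j : ℝ) - i) * (2 ^ 15 / (Q : ℝ) ^ 2) := by
        have : 0 ≤ (j : ℝ) - i := by linarith
        gcongr ?_ * ?_
        rw [div_le_div_iff₀ hm₀ (by positivity)]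
        linarith
    _ = (j - i) * (1 / (Q : ℝ) ^ 2) - (j - i) * (1 / (2 * (Q : ℝ) ^ 2)) := by
        field_simp
        norm_num
    _ ≤ (j - i) * (1 / (Q : ℝ) ^ 2) - 1 / (2 * (Q : ℝ) ^ 2) := by
        gcongr
        exact le_mul_of_one_le_left (by positivity) (by linarith)
    _ ≤ (f j).left - (f i).right := by
        linarith [hsep i j hij.le hj, hleft j hj, hright i (hij.trans hj)]

theorem ofReal_le_dimH_ESet (hs : 0 < s) (hs₁ : s ≤ 1)
    (hfreq : ∀ C : ℝ, ∃ᶠ Q : ℕ in atTop, C ≤ (Q : ℝ) ^ 2 * (Ψ Q * ω Q) ^ s) :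
    ENNReal.ofReal s ≤ dimH (ESet Ψ ω) := by
  have hR₀ : 0 < R₀ := by linarith [h.one_le]
  choose m hm f hf hgap using h.exists_children (R₀ := R₀) hs.le hfreq
  let K : CantorSystem (Node Ψ s R₀) s (1 / 2 ^ 16) :=
    { left := Node.left
      right := Node.right
      mass := Node.mass
      arity := m
      child := f
      left_lt_right := Node.left_lt_right
      mass_pos := Node.mass_pos
      mass_le_rpow := Node.mass_le_rpow
      two_le_arity := hm
      Icc_child_subset := fun {σ i} hi => (hf σ i hi).1.Icc_subset
      mass_child := fun {σ i} hi => (hf σ i hi).2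
      le_gap := fun {σ i j} => hgap σ i j }
  let root : Node Ψ s R₀ :=
    { left := 0
      right := 1
      threshold := R₀
      mass := 1
      left_lt_right := one_pos
      le_threshold := le_rfl
      psi_threshold_le := by
        have := h.sq_mul_psi_le le_rfl
        have := h.psi_pos R₀ hR₀
        nlinarith [h.one_le]
      mass_pos := one_pos
      mass_le_rpow := by simp }
  refine K.ofReal_le_dimH hs hs₁ (by norm_num) root fun t ht x hx => ?_
  refine mem_ESet_of_branch hR₀ (fun n => (K.next^[n] (root, t)).1) (fun n => ?_) (mem_iInter.1 hx)
  obtain ⟨i, hi, hchild⟩ := K.exists_fst_iterate_next_succ (p := (root, t)) ht n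
  exact hchild ▸ (hf _ i hi).1

end AdmissiblePair

/-- Halving `ω` gains the factor `2` of `AdmissiblePair.psi_threshold_le`, and makes `ω ≤ 1 / 2`. -/
theorem exists_admissiblePair_half {Ψ ω : ℝ → ℝ} (hΨ : ∀ q, 0 < q → 0 < Ψ q)
    (hω : ∀ q, 0 < q → ω q ∈ Ioc 0 1) (hmono : AntitoneOn (fun q => q ^ 2 * Ψ q) (Ioi 0))
    (hmono' : AntitoneOn (fun q => q ^ 2 * Ψ q * ω q) (Ioi 0))
    (hsum : Summable fun q : ℕ => (q : ℝ) * Ψ q)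
    (hbig : ∀ᶠ q in atTop, 45 / Ψ q * Ψ (1 / (2 * q * Ψ q)) ≤ ω q) :
    ∃ R₀, AdmissiblePair Ψ (fun q => ω q / 2) R₀ := by
  obtain ⟨R₁, -, htail⟩ :=
    exists_dyadic_sum_le (fun q hq => (hΨ q hq).le) hmono hsum (ε := 1 / 2 ^ 22) (by norm_num)
  obtain ⟨R₂, hR₂⟩ := eventually_atTop.1 hbig
  refine ⟨max 1 (max R₁ R₂), le_max_left _ _, hΨ, fun q hq => ?_, hmono, fun q hq r hr hqr => ?_,
    fun R hR => htail R ((le_max_left _ _).trans ((le_max_right _ _).trans hR)), fun q hq => ?_⟩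
  · have := hω q hq
    exact ⟨half_pos this.1, by linarith [this.2]⟩
  · linarith [hmono' hq hr hqr]
  · simp only [max_le_iff] at hq
    have := hR₂ q hq.2.2
    rw [div_mul_eq_mul_div, div_le_iff₀ (hΨ q (by linarith))] at this
    linarith

theorem ESet_mono {Ψ ω ω' : ℝ → ℝ} (hΨ : ∀ q, 0 < q → 0 ≤ Ψ q) (hω : ∀ q, 0 < q → ω q ≤ ω' q) :
    ESet Ψ ω ⊆ ESet Ψ ω' := by
  rintro x ⟨hx, Q, hQ⟩
  refine ⟨hx, max Q 1, fun q hq p => le_trans ?_ (hQ q ((le_max_left _ _).trans hq) p)⟩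
  have hq₀ : (0 : ℝ) < q := by exact_mod_cast (le_max_right _ _).trans hq
  have := hΨ q hq₀
  have := hω q hq₀
  gcongr

theorem ofReal_le_dimH_ESet_of_not_summable {Ψ ω : ℝ → ℝ} (hΨ : ∀ q, 0 < q → 0 < Ψ q)
    (hω : ∀ q, 0 < q → ω q ∈ Ioc 0 1) (hmono : AntitoneOn (fun q => q ^ 2 * Ψ q) (Ioi 0))
    (hmono' : AntitoneOn (fun q => q ^ 2 * Ψ q * ω q) (Ioi 0))
    (hsum : Summable fun q : ℕ => (q : ℝ) * Ψ q)
    (hbig : ∀ᶠ q in atTop, 45 / Ψ q * Ψ (1 / (2 * q * Ψ q)) ≤ ω q) {s s' : ℝ} (hs : 0 < s)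
    (hs₁ : s ≤ 1) (hss' : s < s') (hns : ¬ Summable fun q : ℕ => (q : ℝ) * (Ψ q * ω q) ^ s') :
    ENNReal.ofReal s ≤ dimH (ESet Ψ ω) := by
  obtain ⟨R₀, h⟩ := exists_admissiblePair_half hΨ hω hmono hmono' hsum hbig
  have hρ : ∀ q : ℕ, 0 < q → 0 ≤ Ψ q * ω q := fun q hq =>
    mul_nonneg (hΨ q (by exact_mod_cast hq)).le (hω q (by exact_mod_cast hq)).1.le
  have hfreq : ∀ C : ℝ, ∃ᶠ q : ℕ in atTop, C ≤ (q : ℝ) ^ 2 * (Ψ q * (ω q / 2)) ^ s := fun C =>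
    ((frequently_le_sq_mul_rpow_of_not_summable hρ hs hss' hns (C * 2 ^ s)).and_eventually
      (eventually_gt_atTop 0)).mono fun q ⟨hq, hq₀⟩ => by
        rwa [mul_div_assoc', Real.div_rpow (hρ q hq₀) zero_le_two, mul_div_assoc',
          le_div_iff₀ (by positivity)]
  exact (h.ofReal_le_dimH_ESet hs hs₁ hfreq).trans <|
    dimH_mono <| ESet_mono h.psi_nonneg fun q hq => half_le_self (hω q hq).1.le

/-! ### The dimension formula -/

/-- The exponents `s ≥ 0` with `∑ q ρ(q)^s < ∞`, whose infimum is the dimension in question. -/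
def convergenceExponents (ρ : ℕ → ℝ) : Set ℝ :=
  {s | 0 ≤ s ∧ Summable fun q : ℕ => (q : ℝ) * ρ q ^ s}

theorem bddBelow_convergenceExponents (ρ : ℕ → ℝ) : BddBelow (convergenceExponents ρ) :=
  ⟨0, fun _ hs => hs.1⟩

theorem pos_of_mem_convergenceExponents {ρ : ℕ → ℝ} {s : ℝ} (hs : s ∈ convergenceExponents ρ) :
    0 < s := by
  refine hs.1.lt_of_ne fun h₀ => ?_
  obtain ⟨-, hsum⟩ := h₀ ▸ hs
  simp only [Real.rpow_zero, mul_one] at hsum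
  exact not_tendsto_nhds_of_tendsto_atTop tendsto_natCast_atTop_atTop 0 hsum.tendsto_atTop_zero

theorem one_mem_convergenceExponents_of_le {ρ f : ℕ → ℝ} (hρ : ∀ q, 0 < q → 0 ≤ ρ q)
    (hρf : ∀ q, 0 < q → ρ q ≤ f q) (hf : Summable fun q : ℕ => (q : ℝ) * f q) :
    1 ∈ convergenceExponents ρ := by
  refine ⟨zero_le_one, hf.of_norm_bounded fun q => ?_⟩
  rcases q.eq_zero_or_pos with rfl | hq
  · simp
  · have := hρ q hq
    rw [Real.rpow_one, Real.norm_of_nonneg (by positivity)]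
    have := hρf q hq
    gcongr

theorem eventually_le_one_of_summable_mul {f : ℕ → ℝ}
    (hf : Summable fun q : ℕ => (q : ℝ) * f q) : ∀ᶠ q in atTop, f q ≤ 1 := by
  filter_upwards [hf.tendsto_atTop_zero.eventually (ge_mem_nhds one_pos), eventually_gt_atTop 0]
    with q hq hq₀
  have : (1 : ℝ) ≤ q := by exact_mod_cast hq₀
  nlinarith

theorem dimH_ESet_le_ofReal_sInf {Ψ ω : ℝ → ℝ} (hΨ : ∀ᶠ q : ℕ in atTop, Ψ q ≤ 1)
    (hρ : ∀ q : ℕ, 0 < q → 0 ≤ Ψ q * ω q)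
    (hne : (convergenceExponents fun q => Ψ q * ω q).Nonempty) :
    dimH (ESet Ψ ω) ≤ ENNReal.ofReal (sInf (convergenceExponents fun q => Ψ q * ω q)) := by
  rw [ENNReal.ofReal_mono.map_csInf_of_continuousAt ENNReal.continuous_ofReal.continuousAt hne
    (bddBelow_convergenceExponents _)]
  refine le_csInf (hne.image _) (forall_mem_image.2 fun s hs => ?_)
  exact dimH_ESet_le (pos_of_mem_convergenceExponents hs) hΨ hρ hs.2

/-- The case `ω = 1` is the Jarník–Besicovitch formula for `W(Ψ)`. -/
theorem dimH_ESet_general (Ψ ω : ℝ → ℝ)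
    (hΨpos : ∀ q : ℝ, 0 < q → 0 < Ψ q)
    (hωmem : ∀ q : ℝ, 0 < q → ω q ∈ Ioc (0 : ℝ) 1)
    (hmono : AntitoneOn (fun q : ℝ => q ^ 2 * Ψ q) (Ioi 0))
    (hmono' : AntitoneOn (fun q : ℝ => q ^ 2 * Ψ q * ω q) (Ioi 0))
    (hsum : Summable (fun q : ℕ => (q : ℝ) * Ψ (q : ℝ)))
    (hbig : ∀ᶠ q : ℝ in atTop, 45 / Ψ q * Ψ (1 / (2 * q * Ψ q)) ≤ ω q) :
    dimH (ESet Ψ ω) =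
      ENNReal.ofReal (sInf {s : ℝ | 0 ≤ s ∧ Summable fun q : ℕ => (q : ℝ) * (Ψ q * ω q) ^ s}) := by
  have hρ : ∀ q : ℕ, 0 < q → 0 ≤ Ψ q * ω q ∧ Ψ q * ω q ≤ Ψ q := fun q hq => by
    have hΨq := hΨpos q (by exact_mod_cast hq)
    obtain ⟨hω₀, hω₁⟩ := hωmem q (by exact_mod_cast hq)
    exact ⟨by positivity, mul_le_of_le_one_right hΨq.le hω₁⟩
  have hone := one_mem_convergenceExponents_of_le (fun q hq => (hρ q hq).1)
    (fun q hq => (hρ q hq).2) hsum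
  refine le_antisymm (dimH_ESet_le_ofReal_sInf (eventually_le_one_of_summable_mul hsum)
    (fun q hq => (hρ q hq).1) ⟨1, hone⟩) ?_
  refine ENNReal.ofReal_le_of_le_toReal (le_of_forall_lt_imp_le_of_dense fun s hs => ?_)
  rcases le_or_gt s 0 with hs₀ | hs₀
  · exact hs₀.trans ENNReal.toReal_nonneg
  obtain ⟨s', hss', hs'⟩ := exists_between hs
  rw [← ENNReal.ofReal_le_iff_le_toReal (Real.dimH_ne_top _)]
  refine ofReal_le_dimH_ESet_of_not_summable hΨpos hωmem hmono hmono' hsum hbig hs₀ ?_ hss' ?_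
  · exact hs.le.trans (csInf_le (bddBelow_convergenceExponents _) hone)
  · exact fun h => notMem_of_lt_csInf hs' (bddBelow_convergenceExponents _)
      ⟨(hs₀.trans hss').le, h⟩

/-- **Theorem.** Suppose `q ↦ q²Ψ(q)` and `q ↦ q²Ψ(q)ω(q)` are non-increasing on `(0,∞)`,
`Σ_{q≥1} qΨ(q) < ∞`, `ω(q) → 0`, `ω` maps `(0,∞)` into `(0,1)`, and
`ω(q) ≥ (45/Ψ(q))·Ψ(1/(2qΨ(q)))` for all sufficiently large `q`.  Then
`dim_H(E(Ψ,ω)) = inf {s ≥ 0 : Σ_{q≥1} q(Ψ(q)ω(q))^s < ∞}`. -/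
theorem dimH_ESet (Ψ ω : ℝ → ℝ)
    (hΨpos : ∀ q : ℝ, 0 < q → 0 < Ψ q)
    (hωmem : ∀ q : ℝ, 0 < q → ω q ∈ Set.Ioo (0 : ℝ) 1)
    (hmono : AntitoneOn (fun q : ℝ => q ^ 2 * Ψ q) (Set.Ioi 0))
    (hmono' : AntitoneOn (fun q : ℝ => q ^ 2 * Ψ q * ω q) (Set.Ioi 0))
    (hsum : Summable (fun q : ℕ => (q : ℝ) * Ψ (q : ℝ)))
    (hωlim : Filter.Tendsto ω Filter.atTop (nhds 0))
    (hbig : ∀ᶠ q : ℝ in Filter.atTop, 45 / Ψ q * Ψ (1 / (2 * q * Ψ q)) ≤ ω q) :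
    dimH (ESet Ψ ω) = ENNReal.ofReal
      (sInf {s : ℝ | 0 ≤ s ∧ Summable (fun q : ℕ => (q : ℝ) * (Ψ (q : ℝ) * ω (q : ℝ)) ^ s)}) :=
  dimH_ESet_general Ψ ω hΨpos (fun q hq => Ioo_subset_Ioc_self (hωmem q hq)) hmono hmono' hsum hbig
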